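/- arXiv:2604.20648 — 7 statements merged into one kernel-verified Lean document; each statement's English description precedes it below -/
import Mathlib

section
/- Consider d balls and b bins: for each ball i ∈ {1,…,d} a nonempty set S_i ⊆ {1,…,b} of allowed bins is given, and each ball i is independently placed into a bin chosen uniformly at random from S_i. Let X be the number of nonempty bins, i.e., the number of j ∈ {1,…,b} such that some ball is placed in bin j. Then for every real t with 0 < t ≤ E[X], the probability that X < E[X] − t is strictly less than exp(−t²/(2·E[X])). -/
open MeasureTheory

/-!
The events "bin `j` is empty" are negatively correlated: the probability that all bins of a set `J`
are empty is at most the product of the individual probabilities. For a single ball this holds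
because the events "the ball lands in `j`" are disjoint, and independence passes it on to all balls.
Expanding `exp (-s X) = ∏ j, (exp (-s) + (1 - exp (-s)) 1_{j empty})` and integrating, negative
correlation bounds the Laplace transform of `X` by its value for independent bins, so that
`E[exp (-s X)] ≤ exp (-(1 - exp (-s)) E[X])`. Markov's inequality with `s = t / E[X]` and the strict
inequality `exp (-s) < 1 - s + s ^ 2 / 2` finish the proof.
-/

lemma exp_neg_lt_one_sub_add_sq_div_two {s : ℝ} (hs : 0 < s) :
    Real.exp (-s) < 1 - s + s ^ 2 / 2 := by
  have hquad : 1 + s + s ^ 2 / 2 ≤ Real.exp s := Real.quadratic_le_exp_of_nonneg hs.le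
  have hpos : 0 < 1 - s + s ^ 2 / 2 := by nlinarith [sq_nonneg (s - 1)]
  rw [Real.exp_neg, inv_lt_iff_one_lt_mul₀' (Real.exp_pos s)]
  calc 1 < 1 + s ^ 4 / 4 := lt_add_of_pos_right 1 (by positivity)
    _ = (1 + s + s ^ 2 / 2) * (1 - s + s ^ 2 / 2) := by ring
    _ ≤ Real.exp s * (1 - s + s ^ 2 / 2) := mul_le_mul_of_nonneg_right hquad hpos.le

section NegativeCorrelation

open ProbabilityTheory

variable {Ω κ : Type*} {mΩ : MeasurableSpace Ω} {μ : Measure Ω} {A : κ → Set Ω}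

/-- The events `A j` are negatively correlated: the probability that all events of a finite
subfamily occur is at most the product of their probabilities. No inequality is required of the
complementary events. -/
def NegativelyCorrelated (A : κ → Set Ω) (μ : Measure Ω) : Prop :=
  ∀ J : Finset κ, μ.real (⋂ j ∈ J, A j) ≤ ∏ j ∈ J, μ.real (A j)

/-- The number of events `A j` that do not occur, as a real random variable. -/
noncomputable def failureCount [Fintype κ] (A : κ → Set Ω) (ω : Ω) : ℝ :=
  ∑ j, (A j)ᶜ.indicator 1 ω

lemma negativelyCorrelated_compl_of_pairwise_disjoint [IsProbabilityMeasure μ]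
    (hA : ∀ j, MeasurableSet (A j)) (hdisj : Pairwise (Function.onFun Disjoint A)) :
    NegativelyCorrelated (fun j ↦ (A j)ᶜ) μ := by
  classical
  intro J
  induction J using Finset.induction_on with
  | empty => simp
  | insert k J hk ih =>
    set C := ⋂ j ∈ J, (A j)ᶜ
    have hsub : A k ⊆ C := Set.subset_iInter₂ fun j hj ↦
      (hdisj (ne_of_mem_of_not_mem hj hk).symm).subset_compl_right
    rw [Finset.set_biInter_insert, Finset.prod_insert hk]
    calc μ.real ((A k)ᶜ ∩ C) = μ.real C - μ.real (A k) := by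
          rw [Set.inter_comm, ← Set.sdiff_eq, measureReal_sdiff hsub (hA k)]
      _ ≤ (1 - μ.real (A k)) * μ.real C := by
          nlinarith [measureReal_nonneg (μ := μ) (s := A k), measureReal_le_one (μ := μ) (s := C)]
      _ = μ.real (A k)ᶜ * μ.real C := by rw [probReal_compl_eq_one_sub (hA k)]
      _ ≤ μ.real (A k)ᶜ * ∏ j ∈ J, μ.real (A j)ᶜ :=
          mul_le_mul_of_nonneg_left ih measureReal_nonneg

section FailureCount

variable [Fintype κ]

lemma measurable_failureCount (hA : ∀ j, MeasurableSet (A j)) : Measurable (failureCount A) :=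
  Finset.measurable_sum _ fun j _ ↦ measurable_one.indicator (hA j).compl

lemma failureCount_mem_Icc (A : κ → Set Ω) (ω : Ω) :
    failureCount A ω ∈ Set.Icc (0 : ℝ) (Fintype.card κ) := by
  refine ⟨Finset.sum_nonneg fun j _ ↦ Set.indicator_nonneg (fun _ _ ↦ zero_le_one) ω, ?_⟩
  calc failureCount A ω ≤ ∑ _j : κ, (1 : ℝ) := Finset.sum_le_sum fun j _ ↦
        Set.indicator_le_self' (fun _ _ ↦ zero_le_one) ω
    _ = Fintype.card κ := by simp

lemma integral_failureCount [IsProbabilityMeasure μ] (hA : ∀ j, MeasurableSet (A j)) :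
    ∫ ω, failureCount A ω ∂μ = ∑ j, (1 - μ.real (A j)) := by
  simp only [failureCount]
  rw [integral_finsetSum _ fun j _ ↦ (integrable_const 1).indicator (hA j).compl]
  exact Finset.sum_congr rfl fun j _ ↦ by
    rw [integral_indicator_one (hA j).compl, probReal_compl_eq_one_sub (hA j)]

lemma exp_neg_mul_failureCount (A : κ → Set Ω) (s : ℝ) (ω : Ω) :
    Real.exp (-s * failureCount A ω) =
      ∏ j, ((1 - Real.exp (-s)) * (A j).indicator 1 ω + Real.exp (-s)) := by
  rw [failureCount, Finset.mul_sum, Real.exp_sum]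
  refine Finset.prod_congr rfl fun j _ ↦ ?_
  by_cases hω : ω ∈ A j <;> simp [hω]

end FailureCount

namespace NegativelyCorrelated

lemma integral_prod_mul_indicator_add_le [IsFiniteMeasure μ] (hneg : NegativelyCorrelated A μ)
    (hA : ∀ j, MeasurableSet (A j)) {p q : κ → ℝ} (hp : ∀ j, 0 ≤ p j) (hq : ∀ j, 0 ≤ q j)
    (s : Finset κ) :
    ∫ ω, ∏ j ∈ s, (p j * (A j).indicator 1 ω + q j) ∂μ ≤
      ∏ j ∈ s, (p j * μ.real (A j) + q j) := by
  classical
  have hmeas (J : Finset κ) : MeasurableSet (⋂ j ∈ J, A j) := J.measurableSet_biInter fun j _ ↦ hA j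
  have hind (J : Finset κ) (ω : Ω) :
      ∏ j ∈ J, (A j).indicator (1 : Ω → ℝ) ω = (⋂ j ∈ J, A j).indicator 1 ω := by
    rw [prod_indicator_const_apply, one_pow]
  simp only [Finset.prod_add, Finset.prod_mul_distrib, hind]
  rw [integral_finsetSum _ fun J _ ↦
    (((integrable_const 1).indicator (hmeas J)).const_mul _).mul_const _]
  refine Finset.sum_le_sum fun J _ ↦ ?_
  rw [integral_mul_const, integral_const_mul, integral_indicator_one (hmeas J)]
  gcongr
  · exact Finset.prod_nonneg fun j _ ↦ hq j
  · exact Finset.prod_nonneg fun j _ ↦ hp j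
  · exact hneg J

lemma iInter_preimage {ι : Type*} [Finite ι] {β : ι → Type*} {mβ : ∀ i, MeasurableSpace (β i)}
    {Y : ∀ i, Ω → β i} (hY : iIndepFun Y μ) {B : ∀ i, κ → Set (β i)}
    (hB : ∀ i j, MeasurableSet (B i j))
    (hneg : ∀ i, NegativelyCorrelated (fun j ↦ Y i ⁻¹' B i j) μ) :
    NegativelyCorrelated (fun j ↦ ⋂ i, Y i ⁻¹' B i j) μ := by
  cases nonempty_fintype ι
  have hprod {C : ∀ i, Set (β i)} (hC : ∀ i, MeasurableSet (C i)) :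
      μ.real (⋂ i, Y i ⁻¹' C i) = ∏ i, μ.real (Y i ⁻¹' C i) := by
    simp only [measureReal_def, hY.meas_iInter fun i ↦ ⟨C i, hC i, rfl⟩, ENNReal.toReal_prod]
  intro J
  have hswap : ⋂ j ∈ J, ⋂ i, Y i ⁻¹' B i j = ⋂ i, Y i ⁻¹' ⋂ j ∈ J, B i j := by
    ext ω; simp only [Set.mem_iInter, Set.mem_preimage]; tauto
  calc μ.real (⋂ j ∈ J, ⋂ i, Y i ⁻¹' B i j)
      = ∏ i, μ.real (⋂ j ∈ J, Y i ⁻¹' B i j) := by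
        rw [hswap, hprod fun i ↦ J.measurableSet_biInter fun j _ ↦ hB i j]
        simp only [Set.preimage_iInter₂]
    _ ≤ ∏ i, ∏ j ∈ J, μ.real (Y i ⁻¹' B i j) :=
        Finset.prod_le_prod (fun _ _ ↦ measureReal_nonneg) fun i _ ↦ hneg i J
    _ = ∏ j ∈ J, μ.real (⋂ i, Y i ⁻¹' B i j) := by
        rw [Finset.prod_comm]
        exact Finset.prod_congr rfl fun j _ ↦ (hprod fun i ↦ hB i j).symm

variable [Fintype κ] [IsProbabilityMeasure μ]

lemma mgf_failureCount_le (hneg : NegativelyCorrelated A μ) (hA : ∀ j, MeasurableSet (A j))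
    {s : ℝ} (hs : 0 ≤ s) :
    mgf (failureCount A) μ (-s) ≤
      Real.exp ((Real.exp (-s) - 1) * ∫ ω, failureCount A ω ∂μ) := by
  have hexp_nonneg : 0 ≤ Real.exp (-s) := (Real.exp_pos _).le
  have hone_sub : 0 ≤ 1 - Real.exp (-s) := sub_nonneg.2 (Real.exp_le_one_iff.2 (neg_nonpos.2 hs))
  calc mgf (failureCount A) μ (-s)
      ≤ ∏ j, ((1 - Real.exp (-s)) * μ.real (A j) + Real.exp (-s)) := by
        simp only [mgf, exp_neg_mul_failureCount]
        exact hneg.integral_prod_mul_indicator_add_le hA (fun _ ↦ hone_sub)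
          (fun _ ↦ hexp_nonneg) Finset.univ
    _ ≤ ∏ j, Real.exp ((Real.exp (-s) - 1) * (1 - μ.real (A j))) := by
        refine Finset.prod_le_prod (fun j _ ↦ by positivity) fun j _ ↦ ?_
        refine Eq.trans_le ?_ (Real.add_one_le_exp _)
        ring
    _ = Real.exp ((Real.exp (-s) - 1) * ∫ ω, failureCount A ω ∂μ) := by
        rw [integral_failureCount hA, Finset.mul_sum, Real.exp_sum]

theorem measureReal_failureCount_le_sub_lt (hneg : NegativelyCorrelated A μ)
    (hA : ∀ j, MeasurableSet (A j)) {t : ℝ} (ht : 0 < t) (hE : 0 < ∫ ω, failureCount A ω ∂μ) :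
    μ.real {ω | failureCount A ω ≤ (∫ ω, failureCount A ω ∂μ) - t} <
      Real.exp (-t ^ 2 / (2 * ∫ ω, failureCount A ω ∂μ)) := by
  set m := ∫ ω, failureCount A ω ∂μ
  set s := t / m
  have hs : 0 < s := div_pos ht hE
  have hexp_integrable : Integrable (fun ω ↦ Real.exp (-s * failureCount A ω)) μ :=
    integrable_exp_mul_of_mem_Icc (measurable_failureCount hA).aemeasurable
      (ae_of_all _ (failureCount_mem_Icc A))
  calc μ.real {ω | failureCount A ω ≤ m - t}
      ≤ Real.exp (-(-s) * (m - t)) * mgf (failureCount A) μ (-s) :=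
        measure_le_le_exp_mul_mgf (m - t) (neg_nonpos.2 hs.le) hexp_integrable
    _ ≤ Real.exp (-(-s) * (m - t)) * Real.exp ((Real.exp (-s) - 1) * m) := by
        gcongr
        exact hneg.mgf_failureCount_le hA hs.le
    _ = Real.exp (s * (m - t) + (Real.exp (-s) - 1) * m) := by rw [neg_neg, Real.exp_add]
    _ < Real.exp (s * (m - t) + ((1 - s + s ^ 2 / 2) - 1) * m) := by
        gcongr
        exact exp_neg_lt_one_sub_add_sq_div_two hs
    _ = Real.exp (-t ^ 2 / (2 * m)) := by
        congr 1
        simp only [s]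
        field_simp
        ring

end NegativelyCorrelated

end NegativeCorrelation

section BallsIntoBins

open ProbabilityTheory

variable {Ω ι κ : Type*} {mΩ : MeasurableSpace Ω} {μ : Measure Ω} {Y : ι → Ω → κ}

/-- The event that no ball `i` lands in bin `j`, where `Y i ω` is the bin of ball `i`. -/
def emptyBin (Y : ι → Ω → κ) (j : κ) : Set Ω :=
  ⋂ i, Y i ⁻¹' {j}ᶜ

lemma card_occupied_eq_failureCount_emptyBin [Fintype κ] (Y : ι → Ω → κ)
    [∀ ω, DecidablePred fun j ↦ ∃ i, Y i ω = j] (ω : Ω) :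
    ((Finset.univ.filter fun j ↦ ∃ i, Y i ω = j).card : ℝ) = failureCount (emptyBin Y) ω := by
  have hocc (j : κ) : ω ∈ (emptyBin Y j)ᶜ ↔ ∃ i, Y i ω = j := by simp [emptyBin]
  classical
  simp only [failureCount, Set.indicator_apply, hocc, Pi.one_apply, Finset.sum_boole]

variable [MeasurableSpace κ] [MeasurableSingletonClass κ]

lemma measurableSet_emptyBin [Countable ι] (hY : ∀ i, Measurable (Y i)) (j : κ) :
    MeasurableSet (emptyBin Y j) :=
  .iInter fun i ↦ hY i (measurableSet_singleton j).compl

lemma negativelyCorrelated_emptyBin [Finite ι] (hY : ∀ i, Measurable (Y i))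
    (hindep : iIndepFun Y μ) : NegativelyCorrelated (emptyBin Y) μ := by
  have := hindep.isProbabilityMeasure
  refine .iInter_preimage hindep (fun _ j ↦ (measurableSet_singleton j).compl) fun i ↦ ?_
  exact negativelyCorrelated_compl_of_pairwise_disjoint (fun j ↦ hY i (measurableSet_singleton j))
    fun j k hjk ↦ (Set.disjoint_singleton.2 hjk).preimage (Y i)

theorem stmt_1_general [Finite ι] [Fintype κ] [∀ ω, DecidablePred fun j ↦ ∃ i, Y i ω = j]
    (hY : ∀ i, Measurable (Y i)) (hindep : iIndepFun Y μ) {t : ℝ} (ht : 0 < t)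
    (hE : 0 < ∫ ω, ((Finset.univ.filter fun j ↦ ∃ i, Y i ω = j).card : ℝ) ∂μ) :
    μ.real {ω | ((Finset.univ.filter fun j ↦ ∃ i, Y i ω = j).card : ℝ) ≤
        (∫ ω, ((Finset.univ.filter fun j ↦ ∃ i, Y i ω = j).card : ℝ) ∂μ) - t} <
      Real.exp (-t ^ 2 /
        (2 * ∫ ω, ((Finset.univ.filter fun j ↦ ∃ i, Y i ω = j).card : ℝ) ∂μ)) := by
  have := hindep.isProbabilityMeasure
  simp only [card_occupied_eq_failureCount_emptyBin] at hE ⊢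
  exact (negativelyCorrelated_emptyBin hY hindep).measureReal_failureCount_le_sub_lt
    (measurableSet_emptyBin hY) ht hE

end BallsIntoBins

/-- **Balls into bins concentration.** `d` balls are placed independently, ball `i` uniformly
into one of its allowed bins `S i ⊆ Fin b`. If `X` is the number of nonempty bins, then for
every `0 < t ≤ E[X]`, `Pr[X < E[X] - t] < exp(-t²/(2 E[X]))`. -/
theorem stmt_1 (d b : ℕ) (S : Fin d → Finset (Fin b)) (hS : ∀ i, (S i).Nonempty)
    (μ : Measure (Fin d → Fin b))
    (hμ : μ = Measure.pi fun i => (PMF.uniformOfFinset (S i) (hS i)).toMeasure)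
    (t : ℝ) (ht : 0 < t)
    (htE : t ≤ ∫ ω, ((Finset.univ.filter (fun j : Fin b => ∃ i, ω i = j)).card : ℝ) ∂μ) :
    (μ {ω | ((Finset.univ.filter (fun j : Fin b => ∃ i, ω i = j)).card : ℝ) <
        (∫ ω, ((Finset.univ.filter (fun j : Fin b => ∃ i, ω i = j)).card : ℝ) ∂μ) - t}).toReal <
      Real.exp (-t ^ 2 /
        (2 * ∫ ω, ((Finset.univ.filter (fun j : Fin b => ∃ i, ω i = j)).card : ℝ) ∂μ)) := by
  subst hμ
  have hindep := ProbabilityTheory.iIndepFun_pi (X := fun _ x ↦ x)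
    (μ := fun i ↦ (PMF.uniformOfFinset (S i) (hS i)).toMeasure) fun _ ↦ aemeasurable_id
  exact (measureReal_mono (Set.ofPred_subset_ofPred.2 fun _ ↦ le_of_lt)).trans_lt
    (stmt_1_general measurable_pi_apply hindep ht (ht.trans_le htE))
end

section
/- Let C be a nonempty finite set with |C| = q, let S be a finite index set with |S| = d, and for each v ∈ S let A_v ⊆ C be a nonempty subset. Then ∑_{c ∈ C} ∏_{v ∈ S, c ∈ A_v} (1 − 1/(|A_v| + 1)) ≥ q · exp(−d/q). -/
/-!
Apply `exp (-1 / n) ≤ 1 - 1 / (n + 1)` to every factor: the product at a color `c` is at least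
`exp (-x c)`, where `x c` is the sum of `1 / |A v|` over the lists containing `c`. Each list
contributes at most `1` to `∑ c ∈ C, x c`, so `x` has mean at most `|S| / |C|` on `C`, and Jensen's
inequality for `exp` gives the bound.
-/

open Finset Real

theorem exp_neg_inv_le_one_sub_one_div_add_one {x : ℝ} (hx : 0 < x) :
    exp (-x⁻¹) ≤ 1 - 1 / (x + 1) :=
  calc
    exp (-x⁻¹) = (exp x⁻¹)⁻¹ := exp_neg _
    _ ≤ (x⁻¹ + 1)⁻¹ := inv_anti₀ (by positivity) (add_one_le_exp _)
    _ = 1 - 1 / (x + 1) := by field_simp; ring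

theorem card_smul_map_mean_le_sum {𝕜 E F ι : Type*} [Field 𝕜] [LinearOrder 𝕜]
    [IsStrictOrderedRing 𝕜] [AddCommGroup E] [Module 𝕜 E] [AddCommGroup F] [PartialOrder F]
    [IsOrderedAddMonoid F] [Module 𝕜 F] [IsStrictOrderedModule 𝕜 F] {D : Set E} {f : E → F}
    (hf : ConvexOn 𝕜 D f) {s : Finset ι} (hs : s.Nonempty) {p : ι → E} (hp : ∀ i ∈ s, p i ∈ D) :
    (#s : 𝕜) • f ((#s : 𝕜)⁻¹ • ∑ i ∈ s, p i) ≤ ∑ i ∈ s, f (p i) := by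
  have hcard : (0 : 𝕜) < #s := mod_cast hs.card_pos
  rw [← le_inv_smul_iff_of_pos hcard, smul_sum, smul_sum]
  exact hf.map_sum_le (fun _ _ => by positivity) (by simp [hcard.ne']) hp

section Lists

variable {α β : Type*} [DecidableEq α]

theorem sum_sum_inv_card_le_card {𝕜 : Type*} [Semifield 𝕜] [LinearOrder 𝕜]
    [IsStrictOrderedRing 𝕜] (C : Finset α) (S : Finset β) (A : β → Finset α) :
    ∑ c ∈ C, ∑ v ∈ S with c ∈ A v, (#(A v) : 𝕜)⁻¹ ≤ #S :=
  calc
    ∑ c ∈ C, ∑ v ∈ S with c ∈ A v, (#(A v) : 𝕜)⁻¹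
        = ∑ v ∈ S, ∑ c ∈ C with c ∈ A v, (#(A v) : 𝕜)⁻¹ := by
      simp only [sum_filter]
      exact sum_comm
    _ = ∑ v ∈ S, (#(C ∩ A v) : 𝕜) / #(A v) := by
      simp only [sum_const, nsmul_eq_mul, filter_mem_eq_inter, div_eq_mul_inv]
    _ ≤ ∑ _v ∈ S, 1 := by
      gcongr with v
      exact div_le_one_of_le₀ (mod_cast card_le_card inter_subset_right) (Nat.cast_nonneg _)
    _ = #S := by simp

theorem exp_neg_sum_inv_card_le_prod (S : Finset β) (A : β → Finset α) (c : α) :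
    exp (-∑ v ∈ S with c ∈ A v, (#(A v) : ℝ)⁻¹) ≤
      ∏ v ∈ S with c ∈ A v, (1 - 1 / ((#(A v) : ℝ) + 1)) := by
  rw [← sum_neg_distrib, exp_sum]
  refine prod_le_prod (fun _ _ => (exp_pos _).le) fun v hv => ?_
  have hcard : 0 < #(A v) := card_pos.mpr ⟨c, (mem_filter.mp hv).2⟩
  exact exp_neg_inv_le_one_sub_one_div_add_one (mod_cast hcard)

theorem stmt_4_general {C : Finset α} (hC : C.Nonempty) (S : Finset β) (A : β → Finset α) :
    #C * exp (-(#S : ℝ) / #C) ≤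
      ∑ c ∈ C, ∏ v ∈ S with c ∈ A v, (1 - 1 / ((#(A v) : ℝ) + 1)) :=
  calc
    #C * exp (-(#S : ℝ) / #C)
        ≤ #C * exp ((#C : ℝ)⁻¹ * ∑ c ∈ C, -∑ v ∈ S with c ∈ A v, (#(A v) : ℝ)⁻¹) := by
      rw [sum_neg_distrib, inv_mul_eq_div]
      gcongr
      exact sum_sum_inv_card_le_card C S A
    _ ≤ ∑ c ∈ C, exp (-∑ v ∈ S with c ∈ A v, (#(A v) : ℝ)⁻¹) :=
      card_smul_map_mean_le_sum convexOn_exp hC fun _ _ => Set.mem_univ _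
    _ ≤ ∑ c ∈ C, ∏ v ∈ S with c ∈ A v, (1 - 1 / ((#(A v) : ℝ) + 1)) :=
      sum_le_sum fun c _ => exp_neg_sum_inv_card_le_prod S A c

end Lists

/-- **Expected number of available colors, lower bound.** With `|C| = q` colors, `|S| = d`
indices, and nonempty lists `A v ⊆ C`, we have
`∑_{c ∈ C} ∏_{v ∈ S, c ∈ A v} (1 - 1/(|A v|+1)) ≥ q · exp(-d/q)`. -/
theorem stmt_4 {α β : Type*} [DecidableEq α] [DecidableEq β]
    (C : Finset α) (S : Finset β) (q d : ℕ)
    (hq : C.card = q) (hCne : C.Nonempty) (hd : S.card = d)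
    (A : β → Finset α) (hA : ∀ v ∈ S, A v ⊆ C) (hAne : ∀ v ∈ S, (A v).Nonempty) :
    (q : ℝ) * Real.exp (-(d : ℝ) / (q : ℝ)) ≤
      ∑ c ∈ C, ∏ v ∈ S.filter (fun v => c ∈ A v), (1 - 1 / (((A v).card : ℝ) + 1)) := by
  subst hq hd
  exact stmt_4_general hCne S A
end

section
/- For every ε ∈ (0,1) there exists Δ₀ such that the following holds for all integers Δ ≥ Δ₀. Let C be a finite set of colors with ⊥ ∉ C and |C| ≥ (1+ε)·Δ/ln Δ, let S be a finite index set with |S| ≤ Δ, and for each v ∈ S let A_v ⊆ C be nonempty. Suppose each v ∈ S independently samples X_v uniformly at random from A_v ∪ {⊥}, and let A be the number of colors c ∈ C such that no v ∈ S samples c. Then the probability that A < Δ^{ε/2} is at most 2^{−Δ^{ε/2}/100}. -/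
open MeasureTheory

/-- The discrete measurable-space structure on `Option C`. -/
instance optionMeasurableSpace {C : Type*} : MeasurableSpace (Option C) := ⊤

/-!
Read the vertices as balls and the colors as bins. In the product `∏ c, (1 - t c * 1{bin c empty})`
replace, one ball at a time, the indicator that the ball misses bin `c` by its probability. A
single ball hits at most one bin, so its average is an expression of degree at most one in the
hitting probabilities; it consists of the terms of degree at most one in the expansion of the
product obtained by the replacement, and the remaining terms are nonnegative. Hence the number of
empty bins has, for `t ≤ 0`, a moment generating function at most that of a Poisson variable of
the same mean `m`, and Chernoff's inequality bounds its lower tail. Finally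
`m ≥ |C| exp (-Δ / |C|)` by Jensen's inequality, and `q exp (-Δ / q)` dominates `Δ ^ (ε / 2)` when
`q ≥ (1 + ε) Δ / log Δ`, because `1 - 1 / (1 + ε) > ε / 2`.
-/

open Finset Function ProbabilityTheory
open Filter (atTop eventually_gt_atTop)
open scoped unitInterval

theorem prod_add_sum_mul_prod_erase_le_prod_add {ι R : Type*} [DecidableEq ι] [CommSemiring R]
    [PartialOrder R] [IsOrderedRing R] {s : Finset ι} {f g : ι → R}
    (hf : ∀ i ∈ s, 0 ≤ f i) (hg : ∀ i ∈ s, 0 ≤ g i) :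
    ∏ i ∈ s, f i + ∑ i ∈ s, g i * ∏ j ∈ s.erase i, f j ≤ ∏ i ∈ s, (f i + g i) := by
  induction s using Finset.induction_on with
  | empty => simp
  | insert a s ha ih =>
    simp only [forall_mem_insert] at hf hg
    have erase_insert_prod : ∀ i ∈ s, ∏ j ∈ (insert a s).erase i, f j
        = f a * ∏ j ∈ s.erase i, f j := fun i hi ↦ by
      rw [erase_insert_of_ne (ne_of_mem_of_not_mem hi ha).symm,
        prod_insert (mt mem_of_mem_erase ha)]
    have prod_le : ∏ i ∈ s, f i ≤ ∏ i ∈ s, (f i + g i) :=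
      prod_le_prod hf.2 fun i hi ↦ le_add_of_nonneg_right (hg.2 i hi)
    calc ∏ i ∈ insert a s, f i + ∑ i ∈ insert a s, g i * ∏ j ∈ (insert a s).erase i, f j
        = f a * (∏ i ∈ s, f i + ∑ i ∈ s, g i * ∏ j ∈ s.erase i, f j) + g a * ∏ i ∈ s, f i := by
          rw [prod_insert ha, sum_insert ha, erase_insert ha, mul_add, mul_sum,
            sum_congr rfl fun i hi ↦ by rw [erase_insert_prod i hi, mul_left_comm]]
          ring
      _ ≤ f a * ∏ i ∈ s, (f i + g i) + g a * ∏ i ∈ s, (f i + g i) :=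
          add_le_add (mul_le_mul_of_nonneg_left (ih hf.2 hg.2) hf.1)
            (mul_le_mul_of_nonneg_left prod_le hg.1)
      _ = ∏ i ∈ insert a s, (f i + g i) := by rw [prod_insert ha, add_mul]

theorem prod_one_sub_mul_mem_unitInterval {ι : Type*} {s : Finset ι} {a b : ι → ℝ}
    (ha : ∀ i ∈ s, a i ∈ I) (hb : ∀ i ∈ s, b i ∈ I) : ∏ i ∈ s, (1 - a i * b i) ∈ I :=
  unitInterval.submonoid.prod_mem fun i hi ↦
    Set.Icc.one_sub_mem (unitInterval.mul_mem (ha i hi) (hb i hi))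

theorem indicator_one_mem_unitInterval {α : Type*} (s : Set α) (x : α) :
    s.indicator (1 : α → ℝ) x ∈ I :=
  ⟨Set.indicator_nonneg (fun _ _ ↦ zero_le_one) x,
    Set.indicator_le_self' (fun _ _ ↦ zero_le_one) x⟩

section OneBall

variable {α C : Type*} [Fintype C]

theorem prod_one_sub_mul_indicator_compl [DecidableEq C] {B : C → Set α}
    (hB : Pairwise (Disjoint on B)) (t : C → ℝ) (x : α) :
    ∏ c, (1 - t c * (B c)ᶜ.indicator 1 x) =
      ∏ c, (1 - t c) + ∑ c, (B c).indicator 1 x * (t c * ∏ d ∈ univ.erase c, (1 - t d)) := by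
  by_cases hx : ∃ c, x ∈ B c
  · obtain ⟨c, hc⟩ := hx
    have notMem : ∀ d ≠ c, x ∉ B d := fun d hd hxd ↦
      Set.disjoint_left.1 (hB hd) hxd hc
    rw [← mul_prod_erase univ _ (mem_univ c), ← mul_prod_erase univ (1 - t ·) (mem_univ c),
      sum_eq_single c (fun d _ hd ↦ by simp [notMem d hd]) (by simp),
      prod_congr rfl fun d hd ↦ by
        rw [Set.indicator_of_mem (notMem d (ne_of_mem_erase hd)), Pi.one_apply, mul_one]]
    simp only [hc, Set.mem_compl_iff, not_true_eq_false, not_false_eq_true,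
      Set.indicator_of_notMem, Set.indicator_of_mem, Pi.one_apply]
    ring
  · push Not at hx
    simp [hx]

variable [MeasurableSpace α] {μ : Measure α} [IsProbabilityMeasure μ] {B : C → Set α} {t : C → ℝ}

theorem integral_prod_one_sub_mul_indicator_compl_le
    (hBm : ∀ c, MeasurableSet (B c)) (hB : Pairwise (Disjoint on B)) (ht : ∀ c, t c ∈ I) :
    ∫ x, ∏ c, (1 - t c * (B c)ᶜ.indicator 1 x) ∂μ ≤ ∏ c, (1 - t c * μ.real (B c)ᶜ) := by
  classical
  have integrable : ∀ c, Integrable ((B c).indicator (1 : α → ℝ)) μ := fun c ↦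
    (integrable_const 1).indicator (hBm c)
  calc ∫ x, ∏ c, (1 - t c * (B c)ᶜ.indicator 1 x) ∂μ
      = ∏ c, (1 - t c) + ∑ c, μ.real (B c) * t c * ∏ d ∈ univ.erase c, (1 - t d) := by
        simp only [prod_one_sub_mul_indicator_compl hB, mul_assoc]
        rw [integral_add (integrable_const _)
            (integrable_finsetSum _ fun c _ ↦ (integrable c).mul_const _),
          integral_const, probReal_univ, one_smul,
          integral_finsetSum _ fun c _ ↦ (integrable c).mul_const _]
        simp only [integral_mul_const, integral_indicator_one (hBm _)]
    _ ≤ ∏ c, (1 - t c + μ.real (B c) * t c) :=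
        prod_add_sum_mul_prod_erase_le_prod_add (fun c _ ↦ sub_nonneg.2 (ht c).2)
          fun c _ ↦ mul_nonneg measureReal_nonneg (ht c).1
    _ = ∏ c, (1 - t c * μ.real (B c)ᶜ) :=
        prod_congr rfl fun c _ ↦ by rw [probReal_compl_eq_one_sub (hBm c)]; ring

theorem lintegral_prod_one_sub_mul_indicator_compl_le
    (hBm : ∀ c, MeasurableSet (B c)) (hB : Pairwise (Disjoint on B)) (ht : ∀ c, t c ∈ I) :
    ∫⁻ x, .ofReal (∏ c, (1 - t c * (B c)ᶜ.indicator 1 x)) ∂μ ≤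
      .ofReal (∏ c, (1 - t c * μ.real (B c)ᶜ)) := by
  have mem x : ∏ c, (1 - t c * (B c)ᶜ.indicator 1 x) ∈ I :=
    prod_one_sub_mul_mem_unitInterval (fun c _ ↦ ht c)
      fun c _ ↦ indicator_one_mem_unitInterval _ x
  have integrable : Integrable (fun x ↦ ∏ c, (1 - t c * (B c)ᶜ.indicator 1 x)) μ := by
    have measurable_indicator := fun c ↦ (measurable_one (β := α) (α := ℝ)).indicator (hBm c).compl
    exact .of_mem_Icc 0 1 (by fun_prop) (ae_of_all _ mem)
  rw [← ofReal_integral_eq_lintegral_ofReal integrable (ae_of_all _ fun x ↦ (mem x).1)]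
  exact ENNReal.ofReal_le_ofReal (integral_prod_one_sub_mul_indicator_compl_le hBm hB ht)

end OneBall

section EmptyBins

variable {V C : Type*} [Fintype C] {α : V → Type*}

/-- The empty bins in a balls-and-bins experiment: ball `v` ends at the random point `ω v`, and
it lies in bin `c` when `ω v ∈ B v c`. -/
noncomputable def emptyBins (B : ∀ v, C → Set (α v)) (ω : ∀ v, α v) : Finset C :=
  open Classical in {c | ∀ v, ω v ∉ B v c}

theorem exp_mul_card_emptyBins [Fintype V] (B : ∀ v, C → Set (α v)) (ω : ∀ v, α v) (t : ℝ) :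
    Real.exp (t * #(emptyBins B ω)) =
      ∏ c, (1 - (1 - Real.exp t) * ∏ v, (B v c)ᶜ.indicator 1 (ω v)) := by
  classical
  have factor c : 1 - (1 - Real.exp t) * ∏ v, (B v c)ᶜ.indicator 1 (ω v) =
      if c ∈ emptyBins B ω then Real.exp t else 1 := by
    split_ifs with hc
    · have hc : ∀ v, ω v ∉ B v c := by simpa [emptyBins] using hc
      simp [hc]
    · obtain ⟨v, hv⟩ : ∃ v, ω v ∈ B v c := by simpa [emptyBins] using hc
      rw [prod_eq_zero (mem_univ v) (by simp [hv]), mul_zero, sub_zero]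
  rw [prod_congr rfl fun c _ ↦ factor c, prod_ite_mem, univ_inter, prod_const,
    ← Real.exp_nat_mul, mul_comm]

variable [∀ v, MeasurableSpace (α v)] {μ : ∀ v, Measure (α v)} [∀ v, IsProbabilityMeasure (μ v)]
  {B : ∀ v, C → Set (α v)}

theorem measurable_prod_one_sub_mul_prod_indicator_compl (hBm : ∀ v c, MeasurableSet (B v c))
    (t : C → ℝ) (S : Finset V) :
    Measurable fun ω : ∀ v, α v ↦ ∏ c, (1 - t c * ∏ v ∈ S, (B v c)ᶜ.indicator 1 (ω v)) := by
  have measurable_indicator := fun v c ↦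
    ((measurable_one (β := α v) (α := ℝ)).indicator (hBm v c).compl).comp (measurable_pi_apply v)
  fun_prop

theorem lmarginal_prod_one_sub_mul_prod_indicator_compl_le [DecidableEq V]
    (hBm : ∀ v c, MeasurableSet (B v c)) (hB : ∀ v, Pairwise (Disjoint on B v))
    {t : C → ℝ} (ht : ∀ c, t c ∈ I) (S : Finset V) (ω : ∀ v, α v) :
    (∫⋯∫⁻_S, fun ω ↦ .ofReal (∏ c, (1 - t c * ∏ v ∈ S, (B v c)ᶜ.indicator 1 (ω v))) ∂μ) ω ≤
      .ofReal (∏ c, (1 - t c * ∏ v ∈ S, (μ v).real (B v c)ᶜ)) := by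
  induction S using Finset.induction_on generalizing t with
  | empty => simp
  | insert i S hi ih =>
    have average_ball (ω : ∀ v, α v) :
        ∫⁻ x, .ofReal (∏ c, (1 - t c *
          ∏ v ∈ insert i S, (B v c)ᶜ.indicator 1 (update ω i x v))) ∂μ i ≤
        .ofReal (∏ c, (1 - t c * (μ i).real (B i c)ᶜ * ∏ v ∈ S, (B v c)ᶜ.indicator 1 (ω v))) := by
      have others_unchanged x c : ∏ v ∈ S, (B v c)ᶜ.indicator (1 : α v → ℝ) (update ω i x v) =
          ∏ v ∈ S, (B v c)ᶜ.indicator 1 (ω v) :=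
        prod_congr rfl fun v hv ↦ by rw [update_of_ne (ne_of_mem_of_not_mem hv hi)]
      have mem c : t c * ∏ v ∈ S, (B v c)ᶜ.indicator 1 (ω v) ∈ I :=
        unitInterval.mul_mem (ht c) <| unitInterval.submonoid.prod_mem fun v _ ↦
          indicator_one_mem_unitInterval _ _
      simpa only [prod_insert hi, update_self, others_unchanged, mul_assoc, mul_comm,
        mul_left_comm] using
        lintegral_prod_one_sub_mul_indicator_compl_le (μ := μ i) (hBm i) (hB i) mem
    rw [lmarginal_insert' _
      (measurable_prod_one_sub_mul_prod_indicator_compl hBm t (insert i S)).ennreal_ofReal hi]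
    refine (lmarginal_mono average_ball ω).trans ?_
    simpa only [prod_insert hi, mul_assoc] using
      ih fun c ↦ unitInterval.mul_mem (ht c) ⟨measureReal_nonneg, measureReal_le_one⟩

variable [Fintype V]

theorem integral_prod_one_sub_mul_prod_indicator_compl_le
    (hBm : ∀ v c, MeasurableSet (B v c)) (hB : ∀ v, Pairwise (Disjoint on B v))
    {t : C → ℝ} (ht : ∀ c, t c ∈ I) :
    ∫ ω, ∏ c, (1 - t c * ∏ v, (B v c)ᶜ.indicator 1 (ω v)) ∂Measure.pi μ ≤
      ∏ c, (1 - t c * ∏ v, (μ v).real (B v c)ᶜ) := by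
  classical
  obtain ⟨ω₀⟩ := nonempty_of_isProbabilityMeasure (Measure.pi μ)
  have weight_nonneg {b : V → C → ℝ} (hb : ∀ v c, b v c ∈ I) : 0 ≤ ∏ c, (1 - t c * ∏ v, b v c) :=
    (prod_one_sub_mul_mem_unitInterval (fun c _ ↦ ht c)
      fun c _ ↦ unitInterval.submonoid.prod_mem fun v _ ↦ hb v c).1
  have integrand_nonneg (ω : ∀ v, α v) :
      0 ≤ ∏ c, (1 - t c * ∏ v, (B v c)ᶜ.indicator 1 (ω v)) :=
    weight_nonneg fun v c ↦ indicator_one_mem_unitInterval _ (ω v)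
  have bound_nonneg : 0 ≤ ∏ c, (1 - t c * ∏ v, (μ v).real (B v c)ᶜ) :=
    weight_nonneg fun v c ↦ ⟨measureReal_nonneg, measureReal_le_one⟩
  rw [integral_eq_lintegral_of_nonneg_ae (ae_of_all _ integrand_nonneg)
    (measurable_prod_one_sub_mul_prod_indicator_compl hBm t univ).aestronglyMeasurable]
  refine ENNReal.toReal_le_of_le_ofReal bound_nonneg ?_
  rw [lintegral_eq_lmarginal_univ ω₀]
  exact lmarginal_prod_one_sub_mul_prod_indicator_compl_le hBm hB ht univ ω₀

theorem mgf_card_emptyBins_le (hBm : ∀ v c, MeasurableSet (B v c))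
    (hB : ∀ v, Pairwise (Disjoint on B v)) {t : ℝ} (ht : t ≤ 0) :
    mgf (fun ω ↦ (#(emptyBins B ω) : ℝ)) (Measure.pi μ) t ≤
      Real.exp ((Real.exp t - 1) * ∑ c, ∏ v, (μ v).real (B v c)ᶜ) := by
  have hs : 1 - Real.exp t ∈ I := Set.Icc.one_sub_mem ⟨Real.exp_nonneg t, Real.exp_le_one_iff.2 ht⟩
  simp only [mgf, exp_mul_card_emptyBins]
  calc ∫ ω, ∏ c, (1 - (1 - Real.exp t) * ∏ v, (B v c)ᶜ.indicator 1 (ω v)) ∂Measure.pi μ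
      ≤ ∏ c, (1 - (1 - Real.exp t) * ∏ v, (μ v).real (B v c)ᶜ) :=
        integral_prod_one_sub_mul_prod_indicator_compl_le hBm hB fun _ ↦ hs
    _ ≤ ∏ c, Real.exp (-((1 - Real.exp t) * ∏ v, (μ v).real (B v c)ᶜ)) :=
        prod_le_prod (fun c _ ↦ sub_nonneg.2 (unitInterval.mul_mem hs
          (unitInterval.submonoid.prod_mem fun v _ ↦ ⟨measureReal_nonneg, measureReal_le_one⟩)).2)
          fun c _ ↦ Real.one_sub_le_exp_neg _
    _ = Real.exp ((Real.exp t - 1) * ∑ c, ∏ v, (μ v).real (B v c)ᶜ) := by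
        rw [← Real.exp_sum, sum_neg_distrib, ← mul_sum, ← neg_mul, neg_sub]

theorem measureReal_card_emptyBins_le (hBm : ∀ v c, MeasurableSet (B v c))
    (hB : ∀ v, Pairwise (Disjoint on B v)) {t : ℝ} (ht : t ≤ 0) (a : ℝ) :
    (Measure.pi μ).real {ω | #(emptyBins B ω) ≤ a} ≤
      Real.exp (-t * a + (Real.exp t - 1) * ∑ c, ∏ v, (μ v).real (B v c)ᶜ) := by
  have integrable : Integrable (fun ω ↦ Real.exp (t * #(emptyBins B ω))) (Measure.pi μ) := by
    refine .of_mem_Icc 0 1 ?_ (ae_of_all _ fun ω ↦ ⟨Real.exp_nonneg _, Real.exp_le_one_iff.2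
      (mul_nonpos_of_nonpos_of_nonneg ht (Nat.cast_nonneg _))⟩)
    simp only [exp_mul_card_emptyBins]
    exact (measurable_prod_one_sub_mul_prod_indicator_compl hBm _ univ).aemeasurable
  rw [Real.exp_add]
  exact (measure_le_le_exp_mul_mgf a ht integrable).trans
    (mul_le_mul_of_nonneg_left (mgf_card_emptyBins_le hBm hB ht) (Real.exp_nonneg _))

theorem measureReal_card_emptyBins_le_two_rpow_neg (hBm : ∀ v c, MeasurableSet (B v c))
    (hB : ∀ v, Pairwise (Disjoint on B v)) {a : ℝ} (ha : 0 ≤ a)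
    (ha_mean : 4 * a ≤ ∑ c, ∏ v, (μ v).real (B v c)ᶜ) :
    (Measure.pi μ).real {ω | #(emptyBins B ω) ≤ a} ≤ 2 ^ (-a) := by
  -- The choice `t = -log 2` gives `exp (a log 2 - m / 2)` with `m ≥ 4 a`, and `log 2 ≤ 1`.
  have log_two_nonneg := Real.log_nonneg one_le_two
  have exp_neg_log_two : Real.exp (-Real.log 2) = 1 / 2 := by
    rw [Real.exp_neg, Real.exp_log two_pos, one_div]
  refine (measureReal_card_emptyBins_le hBm hB (neg_nonpos.2 log_two_nonneg) a).trans ?_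
  rw [Real.rpow_def_of_pos two_pos, Real.exp_le_exp, exp_neg_log_two]
  nlinarith [mul_le_mul_of_nonneg_right Real.log_two_lt_d9.le ha]

end EmptyBins

theorem card_mul_exp_sum_div_card_le {ι : Type*} (s : Finset ι) (f : ι → ℝ) :
    #s * Real.exp ((∑ i ∈ s, f i) / #s) ≤ ∑ i ∈ s, Real.exp (f i) := by
  obtain rfl | hs := s.eq_empty_or_nonempty
  · simp
  have card_pos : (0 : ℝ) < #s := mod_cast hs.card_pos
  have jensen := convexOn_exp.map_sum_le (t := s) (w := fun _ ↦ (#s : ℝ)⁻¹) (p := f)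
    (fun _ _ ↦ inv_nonneg.2 card_pos.le) (by simp [card_pos.ne']) (fun _ _ ↦ Set.mem_univ _)
  simp only [smul_eq_mul, ← mul_sum] at jensen
  rwa [mul_comm, ← le_div_iff₀ card_pos, div_eq_inv_mul, div_eq_inv_mul]

theorem exp_neg_inv_le_one_sub_inv_add_one {a : ℝ} (ha : 0 < a) :
    Real.exp (-a⁻¹) ≤ 1 - (a + 1)⁻¹ := by
  have : 1 - (a + 1)⁻¹ = (a⁻¹ + 1)⁻¹ := by field_simp; ring
  rw [this, Real.exp_neg]
  exact inv_anti₀ (by positivity) (Real.add_one_le_exp a⁻¹)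

section OptionUniform

variable {C : Type*} [DecidableEq C]

/-- The uniform distribution on `A ∪ {⊥}`, with `none` in the role of `⊥`. -/
noncomputable def optionUniform (A : Finset C) : PMF (Option C) :=
  PMF.uniformOfFinset (A.image some ∪ {none}) (singleton_nonempty none).inr

theorem optionUniform_apply_some (A : Finset C) (c : C) :
    optionUniform A (some c) = if c ∈ A then ((#A : ENNReal) + 1)⁻¹ else 0 := by
  have card_support : #(A.image some ∪ {none}) = #A + 1 := by
    rw [card_union_of_disjoint (by simp),
      card_image_of_injective A (Option.some_injective C), card_singleton]
  rw [optionUniform, PMF.uniformOfFinset_apply, card_support]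
  simp

theorem exp_neg_ite_le_optionUniform_real_compl (A : Finset C) (c : C) :
    Real.exp (-if c ∈ A then (#A : ℝ)⁻¹ else 0) ≤
      (optionUniform A).toMeasure.real {some c}ᶜ := by
  have measurable : MeasurableSet {some c} := trivial
  rw [probReal_compl_eq_one_sub measurable, measureReal_def,
    PMF.toMeasure_apply_singleton _ _ measurable, optionUniform_apply_some]
  split_ifs with hc
  · have card_pos : (0 : ℝ) < #A := mod_cast card_pos.2 ⟨c, hc⟩
    simpa [ENNReal.toReal_add] using exp_neg_inv_le_one_sub_inv_add_one card_pos
  · simp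

theorem card_mul_exp_neg_div_le_sum_prod_optionUniform_real_compl {V : Type*} [Fintype C]
    [Fintype V] (A : V → Finset C) :
    Fintype.card C * Real.exp (-(Fintype.card V / Fintype.card C)) ≤
      ∑ c, ∏ v, (optionUniform (A v)).toMeasure.real {some c}ᶜ := by
  set y : V → C → ℝ := fun v c ↦ if c ∈ A v then (#(A v) : ℝ)⁻¹ else 0
  have sum_y_le : ∑ c, ∑ v, y v c ≤ Fintype.card V := by
    rw [sum_comm, Fintype.card_eq_sum_ones, Nat.cast_sum]
    refine sum_le_sum fun v _ ↦ ?_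
    simpa [y, sum_ite_mem] using mul_inv_le_one
  calc Fintype.card C * Real.exp (-(Fintype.card V / Fintype.card C))
      ≤ Fintype.card C * Real.exp ((∑ c, -∑ v, y v c) / Fintype.card C) := by
        rw [sum_neg_distrib, neg_div]; gcongr
    _ ≤ ∑ c, Real.exp (-∑ v, y v c) := card_mul_exp_sum_div_card_le univ _
    _ = ∑ c, ∏ v, Real.exp (-y v c) := by simp only [← sum_neg_distrib, Real.exp_sum]
    _ ≤ ∑ c, ∏ v, (optionUniform (A v)).toMeasure.real {some c}ᶜ := by
        gcongr; exact exp_neg_ite_le_optionUniform_real_compl _ _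

end OptionUniform

theorem eventually_mul_rpow_le_mul_exp_neg_div {α β : ℝ} (hα : 0 < α) (hβ : β < 1 - α⁻¹) (M : ℝ) :
    ∀ᶠ x in atTop, ∀ q, α * x / Real.log x ≤ q → M * x ^ β ≤ q * Real.exp (-(x / q)) := by
  have log_isLittleO := (isLittleO_log_rpow_atTop (sub_pos.2 hβ)).const_mul_left M
  filter_upwards [log_isLittleO.bound hα, eventually_gt_atTop 1] with x log_bound hx q hq
  have x_pos : 0 < x := one_pos.trans hx
  have log_pos : 0 < Real.log x := Real.log_pos hx
  have q_pos : 0 < q := lt_of_lt_of_le (by positivity) hq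
  have log_le : M * Real.log x ≤ α * x ^ (1 - α⁻¹ - β) :=
    (Real.le_norm_self _).trans <| by
      rwa [Real.norm_of_nonneg (Real.rpow_nonneg x_pos.le _)] at log_bound
  have div_le : x / q ≤ Real.log x * α⁻¹ := by
    rw [div_le_iff₀ log_pos] at hq
    rw [← div_eq_mul_inv, div_le_div_iff₀ q_pos hα]
    linarith
  calc M * x ^ β = M * Real.log x * x ^ β / Real.log x := by field_simp
    _ ≤ α * x ^ (1 - α⁻¹ - β) * x ^ β / Real.log x := by gcongr
    _ = α * x / Real.log x * Real.exp (-(Real.log x * α⁻¹)) := by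
      rw [mul_assoc, ← Real.rpow_add x_pos, ← mul_neg, ← Real.rpow_def_of_pos x_pos,
        sub_add_cancel, sub_eq_add_neg, Real.rpow_add x_pos, Real.rpow_one]
      ring
    _ ≤ q * Real.exp (-(x / q)) := by gcongr

theorem half_lt_one_sub_inv_one_add {ε : ℝ} (hε₀ : 0 < ε) (hε₁ : ε < 1) :
    ε / 2 < 1 - (1 + ε)⁻¹ := by
  have : 1 - (1 + ε)⁻¹ = ε / (1 + ε) := by field_simp; ring
  rw [this]
  exact div_lt_div_of_pos_left hε₀ (by linarith) (by linarith)

/-- **Concentration of the number of available colors.** For every `ε ∈ (0,1)` and all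
sufficiently large `Δ`: with `|C| ≥ (1+ε)Δ/ln Δ` colors, at most `Δ` indices, nonempty
lists `A v ⊆ C`, and each `v` sampling `X v` uniformly and independently from
`(A v).image some ∪ {none}`, the number `A(ω)` of colors sampled by no vertex satisfies
`Pr[A(ω) < Δ^{ε/2}] ≤ 2^{-Δ^{ε/2}/100}`. -/
theorem stmt_7 (ε : ℝ) (hε : ε ∈ Set.Ioo (0 : ℝ) 1) :
    ∃ Δ₀ : ℕ, ∀ Δ : ℕ, Δ₀ ≤ Δ →
      ∀ (C V : Type) [Fintype C] [DecidableEq C] [Fintype V],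
        (1 + ε) * (Δ : ℝ) / Real.log (Δ : ℝ) ≤ (Fintype.card C : ℝ) →
        Fintype.card V ≤ Δ →
        ∀ (A : V → Finset C) (hA : ∀ v, (A v).Nonempty)
          (μ : Measure ((v : V) → Option C)),
          μ = Measure.pi (fun v =>
            (PMF.uniformOfFinset ((A v).image some ∪ {none}) ⟨none, by simp⟩).toMeasure) →
          (μ {ω | ((Finset.univ.filter
              (fun c : C => ∀ v : V, ω v ≠ some c)).card : ℝ) < (Δ : ℝ) ^ (ε / 2)}).toReal ≤
            (2 : ℝ) ^ (-((Δ : ℝ) ^ (ε / 2)) / 100) := by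
  have one_add_pos : 0 < 1 + ε := by linarith [hε.1]
  obtain ⟨Δ₀, hΔ₀⟩ := (tendsto_natCast_atTop_atTop.eventually
    (eventually_mul_rpow_le_mul_exp_neg_div one_add_pos
      (half_lt_one_sub_inv_one_add hε.1 hε.2) 4)).exists_forall_of_atTop
  refine ⟨Δ₀, fun Δ hΔ C V _ _ _ hC hV A _ μ hμ ↦ ?_⟩
  have mean_ge :=
    calc 4 * (Δ : ℝ) ^ (ε / 2)
        ≤ Fintype.card C * Real.exp (-(Δ / Fintype.card C)) := hΔ₀ Δ hΔ _ hC
      _ ≤ Fintype.card C * Real.exp (-(Fintype.card V / Fintype.card C)) := by gcongr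
      _ ≤ ∑ c, ∏ v, (optionUniform (A v)).toMeasure.real {some c}ᶜ :=
        card_mul_exp_neg_div_le_sum_prod_optionUniform_real_compl A
  have available_eq_emptyBins (ω : V → Option C) :
      ({c | ∀ v, ω v ≠ some c} : Finset C) = emptyBins (fun _ c ↦ {some c}) ω := by
    simp [emptyBins]
  simp only [available_eq_emptyBins]
  subst hμ
  have power_nonneg : 0 ≤ (Δ : ℝ) ^ (ε / 2) := by positivity
  calc _ ≤ _ := measureReal_mono (Set.ofPred_subset_ofPred.2 fun _ ↦ le_of_lt)
    _ ≤ 2 ^ (-(Δ : ℝ) ^ (ε / 2)) :=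
      measureReal_card_emptyBins_le_two_rpow_neg (fun _ _ ↦ MeasurableSpace.measurableSet_top)
        (fun _ c d hcd ↦ by simpa [onFun] using hcd) power_nonneg mean_ge
    _ ≤ 2 ^ (-(Δ : ℝ) ^ (ε / 2) / 100) :=
      Real.rpow_le_rpow_of_exponent_le one_le_two (by linarith)
end

section
/- Let G be a finite simple graph on vertex set V, let b ≥ 1, let p : V → Fin b be a partition labeling, and for a labeling r define indeg_r(v) := |{u ∈ N(v) : r(u) = r(v)}|, the number of neighbors of v in its own part. Let w ∈ V, let j ∈ Fin b with j ≠ p(w), and let p' := Function.update p w j (the labeling obtained from p by moving w to part j). Then ∑_{v ∈ V} indeg_{p'}(v) − ∑_{v ∈ V} indeg_p(v) = 2·(|{u ∈ N(w) : p(u) = j}| − |{u ∈ N(w) : p(u) = p(w)}|). In particular, if |{u ∈ N(w) : p(u) = p(w)}| > (1 + 1/k)·Δ/b and |{u ∈ N(w) : p(u) = j}| ≤ Δ/b for reals Δ > 0 and an integer k ≥ 1, then the sum of induced degrees decreases by at least (2/k)·(Δ/b). -/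
/-!
The sum of the induced degrees of a labeling is the degree sum of its monochromatic subgraph.
Moving `w` to another part changes this subgraph only at edges incident to `w`, and by the handshake
lemma each such edge contributes `2` to the degree sum.
-/

open Finset

theorem sum_degrees_eq_two_mul_card_edgeFinset_deleteIncidenceSet_add_degree
    {V : Type*} [Fintype V] [DecidableEq V] (G : SimpleGraph V) [DecidableRel G.Adj] (w : V) :
    ∑ v, G.degree v = 2 * (#(G.deleteIncidenceSet w).edgeFinset + G.degree w) := by
  rw [G.card_edgeFinset_deleteIncidenceSet, Nat.sub_add_cancel (G.degree_le_card_edgeFinset w),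
    G.sum_degrees_eq_twice_card_edges]

theorem sum_degrees_sub_sum_degrees_of_deleteIncidenceSet_eq
    {V : Type*} [Fintype V] {G H : SimpleGraph V} [DecidableRel G.Adj] [DecidableRel H.Adj]
    {w : V} (h : G.deleteIncidenceSet w = H.deleteIncidenceSet w) :
    ∑ v, (G.degree v : ℤ) - ∑ v, (H.degree v : ℤ) = 2 * ((G.degree w : ℤ) - H.degree w) := by
  classical
  have hcard : #(G.deleteIncidenceSet w).edgeFinset = #(H.deleteIncidenceSet w).edgeFinset :=
    congrArg card (SimpleGraph.edgeFinset_inj.mpr h)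
  have hG := sum_degrees_eq_two_mul_card_edgeFinset_deleteIncidenceSet_add_degree G w
  have hH := sum_degrees_eq_two_mul_card_edgeFinset_deleteIncidenceSet_add_degree H w
  rw [← Nat.cast_sum, ← Nat.cast_sum]
  lia

/-- The graph of edges of `G` with both ends in the same part of the labeling `p`; the degree of `v`
in it is the number of neighbors of `v` in its own part. -/
def monochromaticSubgraph {V α : Type*} (G : SimpleGraph V) (p : V → α) : SimpleGraph V where
  Adj v u := G.Adj v u ∧ p u = p v
  symm := ⟨fun _ _ h => ⟨h.1.symm, h.2.symm⟩⟩
  loopless := ⟨fun _ h => G.irrefl h.1⟩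

namespace monochromaticSubgraph

variable {V α : Type*} (G : SimpleGraph V) (p : V → α)

instance [DecidableEq α] [DecidableRel G.Adj] :
    DecidableRel (monochromaticSubgraph G p).Adj :=
  fun v u => inferInstanceAs (Decidable (G.Adj v u ∧ p u = p v))

theorem degree_eq [DecidableEq α] (v : V) [Fintype (G.neighborSet v)]
    [Fintype ((monochromaticSubgraph G p).neighborSet v)] :
    (monochromaticSubgraph G p).degree v = #{u ∈ G.neighborFinset v | p u = p v} := by
  rw [← SimpleGraph.card_neighborFinset_eq_degree]
  congr 1
  ext u
  rw [mem_filter, SimpleGraph.mem_neighborFinset, SimpleGraph.mem_neighborFinset]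
  rfl

theorem degree_update_self [DecidableEq V] [DecidableEq α] (w : V) (j : α)
    [Fintype (G.neighborSet w)]
    [Fintype ((monochromaticSubgraph G (Function.update p w j)).neighborSet w)] :
    (monochromaticSubgraph G (Function.update p w j)).degree w =
      #{u ∈ G.neighborFinset w | p u = j} := by
  rw [degree_eq]
  congr 1
  refine filter_congr fun u hu => ?_
  have hne : u ≠ w := ((G.mem_neighborFinset w u).mp hu).ne'
  rw [Function.update_self, Function.update_of_ne hne]

theorem deleteIncidenceSet_update [DecidableEq V] (w : V) (j : α) :
    (monochromaticSubgraph G (Function.update p w j)).deleteIncidenceSet w =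
      (monochromaticSubgraph G p).deleteIncidenceSet w := by
  ext v u
  simp only [SimpleGraph.deleteIncidenceSet_adj, monochromaticSubgraph]
  refine and_congr_left fun ⟨hv, hu⟩ => ?_
  rw [Function.update_of_ne hu, Function.update_of_ne hv]

end monochromaticSubgraph

theorem stmt_11_general {V α : Type*} [Fintype V] [DecidableEq V] [DecidableEq α]
    (G : SimpleGraph V) [DecidableRel G.Adj] (p : V → α) (w : V) (j : α) :
    (∑ v, (#{u ∈ G.neighborFinset v |
          Function.update p w j u = Function.update p w j v} : ℤ) -
        ∑ v, (#{u ∈ G.neighborFinset v | p u = p v} : ℤ) =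
      2 * ((#{u ∈ G.neighborFinset w | p u = j} : ℤ) -
        #{u ∈ G.neighborFinset w | p u = p w})) ∧
    ∀ t ε : ℝ, (1 + ε) * t < #{u ∈ G.neighborFinset w | p u = p w} →
      #{u ∈ G.neighborFinset w | p u = j} ≤ t →
      ∑ v, (#{u ∈ G.neighborFinset v |
          Function.update p w j u = Function.update p w j v} : ℝ) <
        ∑ v, (#{u ∈ G.neighborFinset v | p u = p v} : ℝ) - 2 * ε * t := by
  have hchange := sum_degrees_sub_sum_degrees_of_deleteIncidenceSet_eq
    (monochromaticSubgraph.deleteIncidenceSet_update G p w j)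
  rw [monochromaticSubgraph.degree_update_self] at hchange
  simp only [monochromaticSubgraph.degree_eq] at hchange
  refine ⟨hchange, fun t ε hown hnew => ?_⟩
  have hchangeReal := congrArg (Int.cast : ℤ → ℝ) hchange
  push_cast at hchangeReal
  linarith

/-- **Effect of moving a vertex between parts on the sum of induced degrees.** For a
labeling `p : V → Fin b` and `indeg_r v = |{u ∈ N(v) : r u = r v}|`, moving `w` to a part
`j ≠ p w` changes `∑ v, indeg v` by exactly
`2·(|{u ∈ N(w) : p u = j}| - |{u ∈ N(w) : p u = p w}|)`; in particular, if `w` violates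
the degree invariant (`> (1+1/k)·Δ/b` same-part neighbors) and `j` is a low-degree part
(`≤ Δ/b` neighbors), the sum decreases by at least `(2/k)·(Δ/b)`. -/
theorem stmt_11 {V : Type*} [Fintype V] [DecidableEq V]
    (G : SimpleGraph V) [DecidableRel G.Adj]
    (b : ℕ) (hb : 1 ≤ b) (p : V → Fin b) (w : V) (j : Fin b) (hj : j ≠ p w)
    (p' : V → Fin b) (hp' : p' = Function.update p w j) :
    ((∑ v, (((G.neighborFinset v).filter (fun u => p' u = p' v)).card : ℤ)) -
        ∑ v, (((G.neighborFinset v).filter (fun u => p u = p v)).card : ℤ) =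
      2 * ((((G.neighborFinset w).filter (fun u => p u = j)).card : ℤ) -
        (((G.neighborFinset w).filter (fun u => p u = p w)).card : ℤ))) ∧
    (∀ (Δ : ℝ) (k : ℕ), 0 < Δ → 1 ≤ k →
      (1 + 1 / (k : ℝ)) * Δ / (b : ℝ) <
        (((G.neighborFinset w).filter (fun u => p u = p w)).card : ℝ) →
      (((G.neighborFinset w).filter (fun u => p u = j)).card : ℝ) ≤ Δ / (b : ℝ) →
      (∑ v, (((G.neighborFinset v).filter (fun u => p' u = p' v)).card : ℝ)) ≤
        (∑ v, (((G.neighborFinset v).filter (fun u => p u = p v)).card : ℝ)) -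
          (2 / (k : ℝ)) * (Δ / (b : ℝ))) := by
  subst hp'
  obtain ⟨hchange, hdecrease⟩ := stmt_11_general G p w j
  refine ⟨hchange, fun Δ k _ _ hown hnew => ?_⟩
  have hlt := hdecrease (Δ / b) (1 / k) (by rwa [← mul_div_assoc]) hnew
  rw [mul_one_div] at hlt
  exact hlt.le
end

section
/- Let k ≥ 2 be an integer and let Δ ≥ 3 be a real number. Define b_k := (1/2)·Δ^{2/(2k−1)} and, for a real x > 1, define c_k(x) := (k+1)·(2k−1)·x/ln x and c_{k−1}(x) := k·(2k−3)·x/ln x. Then c_{k−1}((1 + 1/k)·Δ/b_k) ≤ c_k(Δ)/b_k. -/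
/-!
With `κ` for `k`, all that matters about `b` is `0 < b ≤ (1 + 1/κ) * Δ ^ (2 / (2κ - 1))`: then
`y = (1 + 1/κ) * Δ / b` is at least `Δ ^ r` with `r = 1 - 2 / (2κ - 1) = (2κ - 3) / (2κ - 1)`,
so `log y ≥ r * log Δ`. The factor `1 / r` lost on replacing `log y` by `log Δ` turns `2κ - 3`
into `2κ - 1`, while `κ * (1 + 1/κ) = κ + 1`. Equality holds when `b` attains its upper bound.
-/

theorem rpow_one_sub_le_mul_div {x a b s : ℝ} (hx : 0 < x) (hb : 0 < b) (hbs : b ≤ a * x ^ s) :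
    x ^ (1 - s) ≤ a * x / b := by
  rw [Real.rpow_sub hx, Real.rpow_one, div_le_div_iff₀ (Real.rpow_pos_of_pos hx s) hb]
  calc x * b ≤ x * (a * x ^ s) := by gcongr
    _ = a * x * x ^ s := by ring

theorem mul_div_log_le_div_log_of_rpow_le {x y r : ℝ} (hx : 1 < x) (hr : 0 < r)
    (hxy : x ^ r ≤ y) : r * (y / Real.log y) ≤ y / Real.log x := by
  have hx₀ : 0 < x := zero_lt_one.trans hx
  have hy : 0 < y := (Real.rpow_pos_of_pos hx₀ r).trans_le hxy
  have hlogx : 0 < Real.log x := Real.log_pos hx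
  have hlog : r * Real.log x ≤ Real.log y := (Real.rpow_le_iff_le_log hx₀ hy).mp hxy
  calc r * (y / Real.log y) ≤ r * (y / (r * Real.log x)) := by gcongr
    _ = y / Real.log x := by field_simp

theorem stmt_13_general {κ Δ b : ℝ} (hκ : 3 / 2 < κ) (hΔ : 1 < Δ) (hb₀ : 0 < b)
    (hb : b ≤ (1 + 1 / κ) * Δ ^ (2 / (2 * κ - 1))) :
    κ * (2 * κ - 3) * ((1 + 1 / κ) * Δ / b) / Real.log ((1 + 1 / κ) * Δ / b) ≤
      (κ + 1) * (2 * κ - 1) * Δ / Real.log Δ / b := by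
  have hκ₀ : 0 < κ := by linarith
  have hκ₁ : 0 < 2 * κ - 1 := by linarith
  have hpow := rpow_one_sub_le_mul_div (zero_lt_one.trans hΔ) hb₀ hb
  set r := 1 - 2 / (2 * κ - 1) with hr
  set y := (1 + 1 / κ) * Δ / b with hy
  have hr_mul : 2 * κ - 3 = (2 * κ - 1) * r := by
    rw [hr]
    field_simp
    ring
  have hr_pos : 0 < r := pos_of_mul_pos_right (by linarith) hκ₁.le
  calc κ * (2 * κ - 3) * y / Real.log y
      = κ * (2 * κ - 1) * (r * (y / Real.log y)) := by rw [hr_mul]; ring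
    _ ≤ κ * (2 * κ - 1) * (y / Real.log Δ) := by
        gcongr
        exact mul_div_log_le_div_log_of_rpow_le hΔ hr_pos hpow
    _ = (κ + 1) * (2 * κ - 1) * Δ / Real.log Δ / b := by
        rw [hy]
        field_simp [hκ₀.ne']

/-- **Palette-size recursion.** For an integer `k ≥ 2` and a real `Δ ≥ 3`, with
`b_k = (1/2)·Δ^{2/(2k-1)}`, `c_k(x) = (k+1)(2k-1)·x/ln x`, and
`c_{k-1}(x) = k(2k-3)·x/ln x`, one has `c_{k-1}((1+1/k)·Δ/b_k) ≤ c_k(Δ)/b_k`. -/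
theorem stmt_13 (k : ℕ) (hk : 2 ≤ k) (Δ : ℝ) (hΔ : 3 ≤ Δ)
    (b : ℝ) (hb : b = (1 / 2) * Δ ^ ((2 : ℝ) / (2 * (k : ℝ) - 1))) :
    (k : ℝ) * (2 * (k : ℝ) - 3) * ((1 + 1 / (k : ℝ)) * Δ / b) /
        Real.log ((1 + 1 / (k : ℝ)) * Δ / b) ≤
      ((k : ℝ) + 1) * (2 * (k : ℝ) - 1) * Δ / Real.log Δ / b := by
  have hk₂ : (2 : ℝ) ≤ k := by exact_mod_cast hk
  have hhalf : (1 / 2 : ℝ) ≤ 1 + 1 / k := by linarith [one_div_nonneg.mpr (k.cast_nonneg (α := ℝ))]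
  subst hb
  exact stmt_13_general (by linarith) (by linarith) (by positivity) (by gcongr)
end

section
/- For every ε ∈ (0,1) there exists Δ₀ such that for every integer Δ ≥ Δ₀, every finite triangle-free simple graph G with maximum degree at most Δ admits a proper vertex coloring with at most (1+ε)·Δ/ln Δ colors; that is, G is q-colorable for q = ⌊(1+ε)·Δ/ln Δ⌋. -/
open Finset Filter Real

/-! Adding the vertices one at a time, we show that each new vertex multiplies the number of proper
colorings by at least a fixed `ℓ > 0`. If `C` is the set of proper colorings of `G[S]`, then the
colorings of `G[S ∪ {v}]` number `∑ c ∈ C, |A_c(v)|`, where `A_c(v)` is the set of colors that `c`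
does not use on the neighbors of `v`. To bound this sum, fix `c` outside the neighborhood `N` of
`v`. Since `N` is independent, the colors on `N` become independent uniform choices from lists
that are already determined, and if the lists are long then about `q * exp (-|N| / q)` colors are
missed on average. A list at `u ∈ N` is rarely shorter than `t`: the colorings for which it is
arise from those of `G[S \ {u}]` in fewer than `t` ways each, and by induction
`G[S]` has at least `ℓ` times as many colorings as `G[S \ {u}]`. For `q = (1 + ε) * Δ / log Δ` the
average `q * exp (-Δ / q)` is of order `Δ ^ (ε / (1 + ε)) / log Δ`, so that `ℓ` can be a small power
of `Δ` while `t` depends only on `ε`. -/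

section Inequalities

lemma one_sub_sum_le_prod_one_sub {ι R : Type*} [CommRing R] [LinearOrder R]
    [IsStrictOrderedRing R] {s : Finset ι} {f : ι → R} (h0 : ∀ i ∈ s, 0 ≤ f i)
    (h1 : ∀ i ∈ s, f i ≤ 1) : 1 - ∑ i ∈ s, f i ≤ ∏ i ∈ s, (1 - f i) := by
  induction s using Finset.cons_induction with
  | empty => simp
  | cons a s ha ih =>
    rw [forall_mem_cons] at h0 h1
    have hprod : ∏ i ∈ s, (1 - f i) ≤ 1 :=
      prod_le_one (fun i hi => sub_nonneg.2 (h1.2 i hi)) fun i hi => sub_le_self _ (h0.2 i hi)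
    rw [sum_cons, prod_cons]
    linarith [ih h0.2 h1.2, mul_le_mul_of_nonneg_left hprod h0.1]

lemma exp_one_sub_inv_le {x : ℝ} (hx : 0 < x) : exp (1 - x⁻¹) ≤ x :=
  (le_log_iff_exp_le hx).1 (one_sub_inv_le_log_of_pos hx)

-- The tangent line of `exp (-s)` at `s = m`.
lemma exp_neg_mul_sub_le_mul_exp_neg {p s : ℝ} (hp0 : 0 ≤ p) (hp1 : p ≤ 1) (hs : 0 ≤ s) (m : ℝ) :
    exp (-m) * ((1 + m) * p - s) ≤ p * exp (-s) := by
  have hexp : exp (-s) = exp (-m) * exp (m - s) := by rw [← exp_add]; ring_nf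
  have htangent : p * (m - s + 1) ≤ p * exp (m - s) :=
    mul_le_mul_of_nonneg_left (add_one_le_exp _) hp0
  rw [hexp, mul_left_comm]
  gcongr
  linarith [mul_le_of_le_one_left hs hp1]

lemma eventually_mul_log_le_rpow {a : ℝ} (ha : 0 < a) (C : ℝ) :
    ∀ᶠ x in atTop, C * log x ≤ x ^ a := by
  filter_upwards [((isLittleO_log_rpow_atTop ha).const_mul_left C).bound one_pos,
    eventually_ge_atTop 0] with x hx hx0
  rw [one_mul, norm_of_nonneg (rpow_nonneg hx0 a)] at hx
  exact (le_abs_self _).trans hx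

end Inequalities

section MissProb

variable {α : Type*} [DecidableEq α]

/-- The probability that a uniformly random element of `L` is not `x`; it is `0` for `L = ∅`. -/
noncomputable def missProb (L : Finset α) (x : α) : ℝ := #(L.erase x) / #L

lemma missProb_nonneg (L : Finset α) (x : α) : 0 ≤ missProb L x := by
  unfold missProb; positivity

lemma missProb_le_one (L : Finset α) (x : α) : missProb L x ≤ 1 :=
  div_le_one_of_le₀ (mod_cast card_erase_le) (Nat.cast_nonneg _)

lemma missProb_of_mem {L : Finset α} {x : α} (hx : x ∈ L) : missProb L x = (#L - 1) / #L := by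
  rw [missProb, cast_card_erase_of_mem hx]

lemma missProb_of_notMem {L : Finset α} (hL : L.Nonempty) {x : α} (hx : x ∉ L) :
    missProb L x = 1 := by
  rw [missProb, erase_eq_of_notMem hx, div_self (mod_cast hL.card_ne_zero)]

lemma missProb_pos {L : Finset α} (hL : 1 < #L) (x : α) : 0 < missProb L x := by
  have herase : 0 < #(L.erase x) := by have := pred_card_le_card_erase (s := L) (a := x); lia
  exact div_pos (mod_cast herase) (mod_cast zero_lt_one.trans hL)

variable [Fintype α]

lemma sum_one_sub_missProb {L : Finset α} (hL : L.Nonempty) : ∑ x, (1 - missProb L x) = 1 := by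
  have hcard : (#L : ℝ) ≠ 0 := mod_cast hL.card_ne_zero
  rw [← sum_subset (subset_univ L) fun x _ hx => by rw [missProb_of_notMem hL hx, sub_self],
    sum_congr rfl fun x hx => by rw [missProb_of_mem hx], sum_const, nsmul_eq_mul]
  field_simp
  ring

lemma sum_inv_missProb_sub_one_le {L : Finset α} {t : ℝ} (ht : 1 < t) (hL : t ≤ #L) :
    ∑ x, ((missProb L x)⁻¹ - 1) ≤ t / (t - 1) := by
  have hcard : 1 < (#L : ℝ) := ht.trans_le hL
  have hne : L.Nonempty := card_pos.1 (by exact_mod_cast zero_lt_one.trans hcard)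
  have hsub : (#L : ℝ) - 1 ≠ 0 := by linarith
  rw [← sum_subset (subset_univ L)
      fun x _ hx => by rw [missProb_of_notMem hne hx, inv_one, sub_self],
    sum_congr rfl fun x hx => by rw [missProb_of_mem hx, inv_div], sum_const, nsmul_eq_mul]
  calc (#L : ℝ) * (#L / (#L - 1) - 1) = #L / (#L - 1) := by field_simp; ring
    _ ≤ t / (t - 1) := by
      rw [div_le_div_iff₀ (by linarith) (by linarith)]
      linarith

variable {ι : Type*} {N : Finset ι} {L : ι → Finset α}

lemma card_sub_card_le_sum_prod_missProb (hL : ∀ w ∈ N, (L w).Nonempty) :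
    (Fintype.card α - #N : ℝ) ≤ ∑ x, ∏ w ∈ N, missProb (L w) x := by
  calc (Fintype.card α - #N : ℝ) = ∑ x : α, (1 - ∑ w ∈ N, (1 - missProb (L w) x)) := by
        rw [sum_sub_distrib, sum_comm, sum_congr rfl fun w hw => sum_one_sub_missProb (hL w hw)]
        simp
    _ ≤ ∑ x, ∏ w ∈ N, (1 - (1 - missProb (L w) x)) := sum_le_sum fun x _ =>
        one_sub_sum_le_prod_one_sub (fun w _ => sub_nonneg.2 (missProb_le_one _ x))
          fun w _ => sub_le_self _ (missProb_nonneg _ x)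
    _ = ∑ x, ∏ w ∈ N, missProb (L w) x := by simp only [sub_sub_cancel]

omit [Fintype α] in
lemma exp_neg_sum_le_prod_missProb (hL : ∀ w ∈ N, 1 < #(L w)) (x : α) :
    exp (-∑ w ∈ N, ((missProb (L w) x)⁻¹ - 1)) ≤ ∏ w ∈ N, missProb (L w) x := by
  rw [← sum_neg_distrib, exp_sum]
  refine prod_le_prod (fun _ _ => (exp_pos _).le) fun w hw => ?_
  rw [neg_sub]
  exact exp_one_sub_inv_le (missProb_pos (hL w hw) x)

/-- A lower bound for the expected number of colors, out of `q`, missed by independent uniform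
choices from `n` lists of which `b` are shorter than `t`. The sharp form of the bound is
`(q - b) * exp (-r / (q - b))` with `r = n * (t / (t - 1))`; this is its tangent plane where
`r / (q - b) = m`, which can be averaged over `b`. -/
noncomputable def missBound (m t : ℝ) (q n b : ℕ) : ℝ :=
  exp (-m) * ((1 + m) * (q - b) - n * (t / (t - 1)))

lemma missBound_le_sum_prod_missProb {m t : ℝ} (hm : 0 ≤ m) (ht : 1 < t)
    (hL : ∀ w ∈ N, (L w).Nonempty) :
    missBound m t (Fintype.card α) #N #{w ∈ N | (#(L w) : ℝ) < t} ≤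
      ∑ x, ∏ w ∈ N, missProb (L w) x := by
  set short := {w ∈ N | (#(L w) : ℝ) < t}
  set long := {w ∈ N | ¬ (#(L w) : ℝ) < t}
  have hlong : ∀ w ∈ long, t ≤ #(L w) := fun w hw => not_lt.1 (mem_filter.1 hw).2
  have hcard_long : ∀ w ∈ long, 1 < #(L w) := fun w hw => by exact_mod_cast ht.trans_le (hlong w hw)
  set p : α → ℝ := fun x => ∏ w ∈ short, missProb (L w) x
  set s : α → ℝ := fun x => ∑ w ∈ long, ((missProb (L w) x)⁻¹ - 1)
  have hp0 (x) : 0 ≤ p x := prod_nonneg fun w _ => missProb_nonneg _ x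
  have hp1 (x) : p x ≤ 1 := prod_le_one (fun w _ => missProb_nonneg _ x) fun w _ =>
    missProb_le_one _ x
  have hs0 (x) : 0 ≤ s x := sum_nonneg fun w hw => sub_nonneg.2 <|
    (one_le_inv₀ (missProb_pos (hcard_long w hw) x)).2 (missProb_le_one _ x)
  have hsum_p : (Fintype.card α - #short : ℝ) ≤ ∑ x, p x :=
    card_sub_card_le_sum_prod_missProb fun w hw => hL w (mem_filter.1 hw).1
  have hsum_s : ∑ x, s x ≤ #N * (t / (t - 1)) := by
    have ht' : 0 ≤ t / (t - 1) := div_nonneg (by linarith) (by linarith)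
    calc ∑ x, s x = ∑ w ∈ long, ∑ x, ((missProb (L w) x)⁻¹ - 1) := sum_comm
      _ ≤ #long * (t / (t - 1)) := by
        rw [← nsmul_eq_mul]
        exact sum_le_card_nsmul _ _ _ fun w hw => sum_inv_missProb_sub_one_le ht (hlong w hw)
      _ ≤ #N * (t / (t - 1)) :=
        mul_le_mul_of_nonneg_right (mod_cast card_filter_le _ _) ht'
  calc missBound m t (Fintype.card α) #N #short
      ≤ exp (-m) * ((1 + m) * ∑ x, p x - ∑ x, s x) := by unfold missBound; gcongr
    _ = ∑ x, exp (-m) * ((1 + m) * p x - s x) := by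
      rw [← mul_sum, sum_sub_distrib, mul_sum]
    _ ≤ ∑ x, p x * exp (-s x) := sum_le_sum fun x _ =>
      exp_neg_mul_sub_le_mul_exp_neg (hp0 x) (hp1 x) (hs0 x) m
    _ ≤ ∑ x, ∏ w ∈ N, missProb (L w) x := sum_le_sum fun x _ => by
      rw [← prod_filter_mul_prod_filter_not N fun w => (#(L w) : ℝ) < t]
      exact mul_le_mul_of_nonneg_left (exp_neg_sum_le_prod_missProb hcard_long x) (hp0 x)

lemma exp_neg_div_mul_card_le_sum_missBound {κ : Type*} (C : Finset κ) (b : κ → ℕ)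
    {d n q : ℕ} {t y : ℝ} (ht : 1 < t) (hy : 0 < q - d * y) (hn : n ≤ d)
    (hb : ∑ c ∈ C, (b c : ℝ) ≤ d * y * #C) :
    exp (-(d * (t / (t - 1)) / (q - d * y))) * (q - d * y) * #C ≤
      ∑ c ∈ C, missBound (d * (t / (t - 1)) / (q - d * y)) t q n (b c) := by
  have hr : 0 ≤ t / (t - 1) := div_nonneg (by linarith) (by linarith)
  set r := t / (t - 1)
  set Q : ℝ := q - d * y with hQ
  set m := d * r / Q with hm
  have hm0 : 0 ≤ m := by positivity
  have htangent : (1 + m) * Q - d * r = Q := by rw [hm]; field_simp; ring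
  calc exp (-m) * Q * #C
      = exp (-m) * ((1 + m) * (q * #C - d * y * #C) - d * r * #C) := by
        linear_combination (-exp (-m) * #C) * htangent + exp (-m) * (1 + m) * #C * hQ
    _ ≤ exp (-m) * ((1 + m) * (q * #C - ∑ c ∈ C, (b c : ℝ)) - n * r * #C) := by gcongr
    _ = ∑ c ∈ C, missBound m t q n (b c) := by
        simp only [missBound]
        rw [← mul_sum, sum_sub_distrib, ← mul_sum, sum_sub_distrib]
        simp only [sum_const, nsmul_eq_mul]
        ring

end MissProb

section Recoloring

variable {V α : Type*} [Fintype V] [DecidableEq V]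

lemma sum_sum_update [Fintype α] {M : Type*} [AddCommMonoid M] (f : (V → α) → M) (v : V) :
    ∑ c, ∑ x, f (Function.update c v x) = Fintype.card α • ∑ c, f c := by
  have hswap : Function.Involutive
      fun p : (V → α) × α => (Function.update p.1 v p.2, p.1 v) := fun p => by simp
  calc ∑ c, ∑ x, f (Function.update c v x)
      = ∑ p : (V → α) × α, f (Function.update p.1 v p.2) := (Fintype.sum_prod_type' _).symm
    _ = ∑ p : (V → α) × α, f p.1 := Equiv.sum_comp hswap.toPerm fun p => f p.1
    _ = Fintype.card α • ∑ c, f c := by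
      rw [Fintype.sum_prod_type, smul_sum]
      simp only [sum_const, card_univ]

/-- The functions that take a value in the list `L w` at each `w ∈ N` and agree with `b` off `N`. -/
def recolorings (N : Finset V) (L : V → Finset α) (b : V → α) : Finset (V → α) :=
  Fintype.piFinset fun w => if w ∈ N then L w else {b w}

variable {N : Finset V} {L : V → Finset α} {b c : V → α}

lemma mem_recolorings :
    c ∈ recolorings N L b ↔ (∀ w ∈ N, c w ∈ L w) ∧ ∀ w ∉ N, c w = b w := by
  simp only [recolorings, Fintype.mem_piFinset]
  refine ⟨fun h => ⟨fun w hw => by simpa [hw] using h w, fun w hw => by simpa [hw] using h w⟩,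
    fun h w => ?_⟩
  split_ifs with hw
  exacts [h.1 w hw, mem_singleton.2 (h.2 w hw)]

lemma card_recolorings (N : Finset V) (L : V → Finset α) (b : V → α) :
    #(recolorings N L b) = ∏ w ∈ N, #(L w) := by
  simp only [recolorings, Fintype.card_piFinset, apply_ite card, card_singleton,
    Fintype.prod_ite_mem]

variable [DecidableEq α]

lemma filter_recolorings_ne (N : Finset V) (L : V → Finset α) (b : V → α) (x : α) :
    {c ∈ recolorings N L b | ∀ w ∈ N, c w ≠ x} =
      recolorings N (fun w => (L w).erase x) b := by
  ext c
  simp only [mem_filter, mem_recolorings, mem_erase]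
  exact ⟨fun h => ⟨fun w hw => ⟨h.2 w hw, h.1.1 w hw⟩, h.1.2⟩,
    fun h => ⟨⟨fun w hw => (h.1 w hw).2, h.2⟩, fun w hw => (h.1 w hw).1⟩⟩

lemma sum_card_missed_recolorings [Fintype α] (hL : ∀ w ∈ N, (L w).Nonempty) (b : V → α) :
    ∑ c ∈ recolorings N L b, (#{x | ∀ w ∈ N, c w ≠ x} : ℝ) =
      #(recolorings N L b) * ∑ x, ∏ w ∈ N, missProb (L w) x := by
  have hcard (w) (hw : w ∈ N) : (#(L w) : ℝ) ≠ 0 := mod_cast (hL w hw).card_ne_zero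
  calc ∑ c ∈ recolorings N L b, (#{x | ∀ w ∈ N, c w ≠ x} : ℝ)
      = ∑ x, (#{c ∈ recolorings N L b | ∀ w ∈ N, c w ≠ x} : ℝ) := by
        simp only [← sum_boole]
        exact sum_comm
    _ = ∑ x, #(recolorings N L b) * ∏ w ∈ N, missProb (L w) x := sum_congr rfl fun x _ => by
        rw [filter_recolorings_ne, card_recolorings, card_recolorings, Nat.cast_prod,
          Nat.cast_prod, ← prod_mul_distrib]
        exact prod_congr rfl fun w hw => (mul_div_cancel₀ _ (hcard w hw)).symm
    _ = #(recolorings N L b) * ∑ x, ∏ w ∈ N, missProb (L w) x := (mul_sum _ _ _).symm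

end Recoloring

section PartialColoring

variable {V : Type*} (G : SimpleGraph V) [DecidableRel G.Adj]
  {α : Type*} [DecidableEq α] [Fintype α]

/-- The neighbors of `v` in `G` that belong to `S`. -/
def neighborsIn (S : Finset V) (v : V) : Finset V := {w ∈ S | G.Adj v w}

/-- The colors that `c` does not use on the neighbors of `v` in `S`. -/
def availableColors (S : Finset V) (c : V → α) (v : V) : Finset α :=
  {x | ∀ w ∈ neighborsIn G S v, c w ≠ x}

variable {G} {S : Finset V} {c c' : V → α} {u v w : V}

lemma mem_neighborsIn : w ∈ neighborsIn G S v ↔ w ∈ S ∧ G.Adj v w := mem_filter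

lemma mem_availableColors {x : α} :
    x ∈ availableColors G S c v ↔ ∀ w ∈ neighborsIn G S v, c w ≠ x := by
  simp only [availableColors, mem_filter_univ]

lemma availableColors_congr (h : ∀ w ∈ neighborsIn G S v, c w = c' w) :
    availableColors G S c v = availableColors G S c' v :=
  filter_congr fun _ _ => forall₂_congr fun w hw => by rw [h w hw]

lemma card_neighborsIn_le_degree [Fintype V] (S : Finset V) (v : V) :
    #(neighborsIn G S v) ≤ G.degree v :=
  card_le_card fun _ hw => (G.mem_neighborFinset v _).2 (mem_neighborsIn.1 hw).2

lemma not_adj_of_mem_neighborsIn (hG : G.CliqueFree 3) (hu : u ∈ neighborsIn G S v)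
    (hw : w ∈ neighborsIn G S v) : ¬ G.Adj u w := fun huw =>
  G.isIndepSet_neighborSet_of_triangleFree hG v (mem_neighborsIn.1 hu).2 (mem_neighborsIn.1 hw).2
    huw.ne huw

variable (G) in
/-- The neighbors of `v` in `S` that have fewer than `t` available colors. -/
noncomputable def scarceNeighbors (S : Finset V) (t : ℝ) (c : V → α) (v : V) : Finset V :=
  {w ∈ neighborsIn G S v | (#(availableColors G S c w) : ℝ) < t}

variable [DecidableEq V]

lemma neighborsIn_erase_self : neighborsIn G (S.erase v) v = neighborsIn G S v := by
  ext w
  simp only [mem_neighborsIn, mem_erase]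
  exact ⟨fun h => ⟨h.1.2, h.2⟩, fun h => ⟨⟨h.2.ne', h.1⟩, h.2⟩⟩

lemma availableColors_erase_self : availableColors G (S.erase v) c v = availableColors G S c v := by
  rw [availableColors, neighborsIn_erase_self, availableColors]

lemma availableColors_update_self (S : Finset V) (c : V → α) (v : V) (x : α) :
    availableColors G S (Function.update c v x) v = availableColors G S c v :=
  availableColors_congr fun _ hw => Function.update_of_ne (mem_neighborsIn.1 hw).2.ne' _ _

variable [Fintype V]

variable (G α) in
/-- The colorings that are proper on `S`. They are total functions, so that the values off `S`
are arbitrary and each proper coloring of `G.induce S` is counted once for each choice of them. -/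
def partialColorings (S : Finset V) : Finset (V → α) :=
  {c | ∀ u ∈ S, ∀ w ∈ S, G.Adj u w → c u ≠ c w}

lemma mem_partialColorings :
    c ∈ partialColorings G α S ↔ ∀ u ∈ S, ∀ w ∈ S, G.Adj u w → c u ≠ c w := by
  simp only [partialColorings, mem_filter_univ]

lemma mem_availableColors_of_mem_partialColorings (hc : c ∈ partialColorings G α S) (hv : v ∈ S) :
    c v ∈ availableColors G S c v :=
  mem_availableColors.2 fun w hw =>
    (mem_partialColorings.1 hc v hv w (mem_neighborsIn.1 hw).1 (mem_neighborsIn.1 hw).2).symm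

lemma mem_partialColorings_insert :
    c ∈ partialColorings G α (insert v S) ↔
      c ∈ partialColorings G α S ∧ c v ∈ availableColors G S c v := by
  simp only [mem_partialColorings, mem_availableColors, mem_neighborsIn, forall_mem_insert]
  constructor
  · intro h
    exact ⟨fun u hu => (h.2 u hu).2, fun w hw => (h.1.2 w hw.1 hw.2).symm⟩
  · rintro ⟨hS, hv⟩
    exact ⟨⟨fun h => (G.irrefl h).elim, fun w hw h => (hv w ⟨hw, h⟩).symm⟩,
      fun u hu => ⟨fun h => hv u ⟨hu, h.symm⟩, hS u hu⟩⟩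

lemma update_mem_partialColorings_iff (hv : v ∉ S) {x : α} :
    Function.update c v x ∈ partialColorings G α S ↔ c ∈ partialColorings G α S := by
  simp only [mem_partialColorings]
  refine forall₂_congr fun u hu => forall₂_congr fun w hw => ?_
  rw [Function.update_of_ne (ne_of_mem_of_not_mem hu hv),
    Function.update_of_ne (ne_of_mem_of_not_mem hw hv)]

lemma card_mul_card_filter_partialColorings_insert (hv : v ∉ S) (P : (V → α) → Prop)
    [DecidablePred P] (hP : ∀ c x, P (Function.update c v x) ↔ P c) :
    Fintype.card α * #{c ∈ partialColorings G α (insert v S) | P c} =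
      ∑ c ∈ partialColorings G α S with P c, #(availableColors G S c v) := by
  have hupdate (c : V → α) (x : α) :
      Function.update c v x ∈ partialColorings G α (insert v S) ∧ P (Function.update c v x) ↔
        (c ∈ partialColorings G α S ∧ P c) ∧ x ∈ availableColors G S c v := by
    rw [mem_partialColorings_insert, update_mem_partialColorings_iff hv, Function.update_self,
      availableColors_update_self, hP, and_right_comm]
  have hfilter (A : Finset (V → α)) : ({c | c ∈ A ∧ P c} : Finset _) = {c ∈ A | P c} := by
    rw [← filter_filter, filter_mem_eq_inter, univ_inter]
  calc Fintype.card α * #{c ∈ partialColorings G α (insert v S) | P c}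
      = Fintype.card α • ∑ c : V → α,
          if c ∈ partialColorings G α (insert v S) ∧ P c then 1 else 0 := by
        rw [smul_eq_mul, ← card_filter, hfilter]
    _ = ∑ c : V → α, ∑ x : α,
          if (c ∈ partialColorings G α S ∧ P c) ∧ x ∈ availableColors G S c v then 1 else 0 := by
        rw [← sum_sum_update _ v]
        simp only [hupdate]
    _ = ∑ c ∈ partialColorings G α S with P c, #(availableColors G S c v) := by
        rw [← hfilter, sum_filter]
        refine sum_congr rfl fun c _ => ?_
        split_ifs with hc <;> simp [hc]

lemma card_mul_card_partialColorings_insert (hv : v ∉ S) :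
    Fintype.card α * #(partialColorings G α (insert v S)) =
      ∑ c ∈ partialColorings G α S, #(availableColors G S c v) := by
  simpa only [filter_true] using
    card_mul_card_filter_partialColorings_insert hv (fun _ => True) fun _ _ => Iff.rfl

lemma card_mul_card_filter_card_availableColors_lt_le {t : ℝ} (ht : 0 ≤ t) (hu : u ∈ S) :
    (Fintype.card α * #{c ∈ partialColorings G α S | (#(availableColors G S c u) : ℝ) < t} : ℝ) ≤
      t * #(partialColorings G α (S.erase u)) := by
  have hcount := card_mul_card_filter_partialColorings_insert (G := G) (notMem_erase u S)
    (fun c : V → α => (#(availableColors G S c u) : ℝ) < t)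
    fun c x => by rw [availableColors_update_self]
  rw [insert_erase hu] at hcount
  calc (Fintype.card α * #{c ∈ partialColorings G α S | (#(availableColors G S c u) : ℝ) < t} : ℝ)
      = ∑ c ∈ partialColorings G α (S.erase u) with (#(availableColors G S c u) : ℝ) < t,
          (#(availableColors G S c u) : ℝ) := by
        simp only [availableColors_erase_self] at hcount
        exact_mod_cast hcount
    _ ≤ #{c ∈ partialColorings G α (S.erase u) | (#(availableColors G S c u) : ℝ) < t} • t :=
        sum_le_card_nsmul _ _ _ fun c hc => (mem_filter.1 hc).2.le
    _ ≤ t * #(partialColorings G α (S.erase u)) := by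
        rw [nsmul_eq_mul, mul_comm]
        gcongr
        exact filter_subset _ _

lemma filter_agree_eq_recolorings {N : Finset V} (hNS : N ⊆ S)
    (hN : ∀ u ∈ N, ∀ w ∈ N, ¬ G.Adj u w) {b : V → α} (hb : b ∈ partialColorings G α S) :
    {c ∈ partialColorings G α S | ∀ w ∉ N, c w = b w} =
      recolorings N (availableColors G S b) b := by
  have hoff (w) (hw : w ∈ N) (u) (hu : u ∈ neighborsIn G S w) : u ∉ N := fun h =>
    hN w hw u h (mem_neighborsIn.1 hu).2
  ext c
  rw [mem_filter, mem_recolorings]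
  constructor
  · rintro ⟨hc, hcb⟩
    refine ⟨fun w hw => ?_, hcb⟩
    rw [← availableColors_congr fun u hu => hcb u (hoff w hw u hu)]
    exact mem_availableColors_of_mem_partialColorings hc (hNS hw)
  · rintro ⟨hcN, hcb⟩
    have hne (u) (hu : u ∈ N) (w) (hw : w ∈ S) (huw : G.Adj u w) : c w ≠ c u := by
      have hw' := mem_neighborsIn.2 ⟨hw, huw⟩
      rw [hcb w (hoff u hu w hw')]
      exact mem_availableColors.1 (hcN u hu) w hw'
    refine ⟨mem_partialColorings.2 fun u hu w hw huw => ?_, hcb⟩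
    by_cases huN : u ∈ N
    · exact (hne u huN w hw huw).symm
    by_cases hwN : w ∈ N
    · exact hne w hwN u hu huw.symm
    rw [hcb u huN, hcb w hwN]
    exact mem_partialColorings.1 hb u hu w hw huw

variable {m t : ℝ}

lemma sum_missBound_le_sum_card_availableColors_of_agree (hG : G.CliqueFree 3) (hm : 0 ≤ m)
    (ht : 1 < t) (v : V) {b : V → α} (hb : b ∈ partialColorings G α S) :
    ∑ c ∈ partialColorings G α S with ∀ w ∉ neighborsIn G S v, c w = b w,
        missBound m t (Fintype.card α) #(neighborsIn G S v) #(scarceNeighbors G S t c v) ≤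
      ∑ c ∈ partialColorings G α S with ∀ w ∉ neighborsIn G S v, c w = b w,
        (#(availableColors G S c v) : ℝ) := by
  set N := neighborsIn G S v with hN
  set L := availableColors G S b
  have hNS : N ⊆ S := filter_subset _ _
  have hindep (u) (hu : u ∈ N) (w) (hw : w ∈ N) : ¬ G.Adj u w := not_adj_of_mem_neighborsIn hG hu hw
  have hL (w) (hw : w ∈ N) : (L w).Nonempty :=
    ⟨b w, mem_availableColors_of_mem_partialColorings hb (hNS hw)⟩
  have hscarce (c) (hc : c ∈ recolorings N L b) :
      scarceNeighbors G S t c v = {w ∈ N | (#(L w) : ℝ) < t} :=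
    filter_congr fun w hw => by
      rw [availableColors_congr fun u hu => (mem_recolorings.1 hc).2 u fun h =>
        hindep w hw u h (mem_neighborsIn.1 hu).2]
  rw [filter_agree_eq_recolorings hNS hindep hb, sum_congr rfl fun c hc => by rw [hscarce c hc],
    sum_const, nsmul_eq_mul]
  simp only [availableColors, ← hN]
  rw [sum_card_missed_recolorings hL]
  gcongr
  exact missBound_le_sum_prod_missProb hm ht hL

lemma sum_missBound_le_sum_card_availableColors (hG : G.CliqueFree 3) (hm : 0 ≤ m) (ht : 1 < t)
    (S : Finset V) (v : V) :
    ∑ c ∈ partialColorings G α S,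
        missBound m t (Fintype.card α) #(neighborsIn G S v) #(scarceNeighbors G S t c v) ≤
      ∑ c ∈ partialColorings G α S, (#(availableColors G S c v) : ℝ) := by
  set C := partialColorings G α S
  set restr : (V → α) → ((neighborsIn G S v)ᶜ : Finset V) → α := Finset.restrict _
  have hagree (c b : V → α) : restr c = restr b ↔ ∀ w ∉ neighborsIn G S v, c w = b w := by
    simp [restr, funext_iff]
  have hmaps : ∀ c ∈ C, restr c ∈ C.image restr := fun c hc => mem_image_of_mem _ hc
  rw [← sum_fiberwise_of_maps_to hmaps, ← sum_fiberwise_of_maps_to hmaps]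
  refine sum_le_sum fun y hy => ?_
  obtain ⟨b, hb, rfl⟩ := mem_image.1 hy
  simp only [hagree]
  exact sum_missBound_le_sum_card_availableColors_of_agree hG hm ht v hb

lemma sum_card_scarceNeighbors (S : Finset V) (t : ℝ) (v : V) :
    ∑ c ∈ partialColorings G α S, #(scarceNeighbors G S t c v) =
      ∑ u ∈ neighborsIn G S v,
        #{c ∈ partialColorings G α S | (#(availableColors G S c u) : ℝ) < t} :=
  sum_card_bipartiteAbove_eq_sum_card_bipartiteBelow
    fun c u => (#(availableColors G S c u) : ℝ) < t

end PartialColoring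

section Coloring

variable {V : Type*} [Fintype V] {G : SimpleGraph V} [DecidableRel G.Adj] {d : ℕ} {t l : ℝ}

section

variable {α : Type*} [Fintype α] [DecidableEq V] [DecidableEq α] {S : Finset V} {v : V}

lemma card_filter_card_availableColors_lt_le [Nonempty α] {u : V} (ht : 0 ≤ t) (hl : 0 < l)
    (hu : u ∈ S)
    (hgrowth : l * #(partialColorings G α (S.erase u)) ≤
      Fintype.card α * #(partialColorings G α S)) :
    (#{c ∈ partialColorings G α S | (#(availableColors G S c u) : ℝ) < t} : ℝ) ≤
      t / l * #(partialColorings G α S) := by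
  have hcard : 0 < (Fintype.card α : ℝ) := mod_cast Fintype.card_pos
  set scarce := {c ∈ partialColorings G α S | (#(availableColors G S c u) : ℝ) < t}
  refine le_of_mul_le_mul_left ?_ hcard
  calc (Fintype.card α * #scarce : ℝ)
      ≤ t * #(partialColorings G α (S.erase u)) :=
        card_mul_card_filter_card_availableColors_lt_le ht hu
    _ = t / l * (l * #(partialColorings G α (S.erase u))) := by field_simp
    _ ≤ t / l * (Fintype.card α * #(partialColorings G α S)) := by gcongr
    _ = Fintype.card α * (t / l * #(partialColorings G α S)) := by ring

lemma sum_card_scarceNeighbors_le {y : ℝ} (hy : 0 ≤ y) (hd : G.degree v ≤ d)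
    (hscarce : ∀ u ∈ neighborsIn G S v,
      (#{c ∈ partialColorings G α S | (#(availableColors G S c u) : ℝ) < t} : ℝ) ≤
        y * #(partialColorings G α S)) :
    ∑ c ∈ partialColorings G α S, (#(scarceNeighbors G S t c v) : ℝ) ≤
      d * y * #(partialColorings G α S) := by
  have hn : #(neighborsIn G S v) ≤ d := (card_neighborsIn_le_degree S v).trans hd
  calc ∑ c ∈ partialColorings G α S, (#(scarceNeighbors G S t c v) : ℝ)
      = ∑ u ∈ neighborsIn G S v,
          (#{c ∈ partialColorings G α S | (#(availableColors G S c u) : ℝ) < t} : ℝ) :=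
        mod_cast sum_card_scarceNeighbors S t v
    _ ≤ #(neighborsIn G S v) • (y * #(partialColorings G α S)) := sum_le_card_nsmul _ _ _ hscarce
    _ ≤ d * (y * #(partialColorings G α S)) := by rw [nsmul_eq_mul]; gcongr
    _ = d * y * #(partialColorings G α S) := (mul_assoc _ _ _).symm

lemma mul_card_partialColorings_le [Nonempty α] (hG : G.CliqueFree 3) (hd : ∀ v, G.degree v ≤ d)
    (ht : 1 < t) (hl : 0 < l) (hQ : 0 < Fintype.card α - d * (t / l))
    (hlQ : l ≤ exp (-(d * (t / (t - 1)) / (Fintype.card α - d * (t / l)))) *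
      (Fintype.card α - d * (t / l))) (hv : v ∉ S) :
    l * #(partialColorings G α S) ≤ Fintype.card α * #(partialColorings G α (insert v S)) := by
  induction S using Finset.strongInduction generalizing v with
  | H S ih =>
    have ht0 : 0 ≤ t := (zero_lt_one.trans ht).le
    set Q := Fintype.card α - d * (t / l)
    set m := d * (t / (t - 1)) / Q
    have hm : 0 ≤ m :=
      div_nonneg (mul_nonneg d.cast_nonneg (div_nonneg ht0 (sub_nonneg.2 ht.le))) hQ.le
    have hscarce : ∑ c ∈ partialColorings G α S, (#(scarceNeighbors G S t c v) : ℝ) ≤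
        d * (t / l) * #(partialColorings G α S) := by
      refine sum_card_scarceNeighbors_le (div_nonneg ht0 hl.le) (hd v) fun u hu => ?_
      have huS := (mem_neighborsIn.1 hu).1
      refine card_filter_card_availableColors_lt_le ht0 hl huS ?_
      simpa only [insert_erase huS] using ih _ (erase_ssubset huS) (notMem_erase u S)
    calc l * #(partialColorings G α S)
        ≤ exp (-m) * Q * #(partialColorings G α S) := by gcongr
      _ ≤ ∑ c ∈ partialColorings G α S,
            missBound m t (Fintype.card α) #(neighborsIn G S v) #(scarceNeighbors G S t c v) :=
          exp_neg_div_mul_card_le_sum_missBound _ _ ht hQ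
            ((card_neighborsIn_le_degree S v).trans (hd v)) hscarce
      _ ≤ ∑ c ∈ partialColorings G α S, (#(availableColors G S c v) : ℝ) :=
          sum_missBound_le_sum_card_availableColors hG hm ht S v
      _ = Fintype.card α * #(partialColorings G α (insert v S)) :=
          mod_cast (card_mul_card_partialColorings_insert hv).symm

end

theorem colorable_of_le_exp_neg_mul {q : ℕ} (hG : G.CliqueFree 3)
    (hd : ∀ v, G.degree v ≤ d) (ht : 1 < t) (hl : 0 < l) (hQ : 0 < q - d * (t / l))
    (hlQ : l ≤ exp (-(d * (t / (t - 1)) / (q - d * (t / l)))) * (q - d * (t / l))) :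
    G.Colorable q := by
  classical
  have hq : 0 < (q : ℝ) := (by positivity : 0 ≤ d * (t / l)).trans_lt (sub_pos.1 hQ)
  have : NeZero q := ⟨by rintro rfl; simp at hq⟩
  have hpos (S : Finset V) : 0 < #(partialColorings G (Fin q) S) := by
    induction S using Finset.induction_on with
    | empty => exact card_pos.2 ⟨0, by simp [mem_partialColorings]⟩
    | insert v S hv ih =>
      have hgrowth : l * #(partialColorings G (Fin q) S) ≤
          q * #(partialColorings G (Fin q) (insert v S)) := by
        simpa only [Fintype.card_fin] using mul_card_partialColorings_le (α := Fin q) hG hd ht hl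
          (by rwa [Fintype.card_fin]) (by rwa [Fintype.card_fin]) hv
      have := (by positivity : 0 < l * #(partialColorings G (Fin q) S)).trans_le hgrowth
      exact_mod_cast pos_of_mul_pos_right this hq.le
  obtain ⟨c, hc⟩ := card_pos.1 (hpos univ)
  exact ⟨SimpleGraph.Coloring.mk c fun {u w} h =>
    mem_partialColorings.1 hc u (mem_univ u) w (mem_univ w) h⟩

end Coloring

section Asymptotics

variable {D Q l t ε : ℝ}

lemma mul_div_log_le_floor_sub (hε : 0 < ε) (hlog : 0 < log D) (hl : 0 < l)
    (htl : 4 * t / ε * log D ≤ l) (hD : 4 / ε * log D ≤ D) :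
    (1 + ε / 2) * (D / log D) ≤ ⌊(1 + ε) * D / log D⌋₊ - D * (t / l) := by
  have hD0 : 0 < D := (by positivity : 0 < 4 / ε * log D).trans_le hD
  have hscarce : D * (t / l) ≤ ε / 4 * (D / log D) := by
    have : t / l ≤ ε / 4 / log D := by
      rw [div_le_div_iff₀ hl hlog]
      calc t * log D = ε / 4 * (4 * t / ε * log D) := by field_simp
        _ ≤ ε / 4 * l := by gcongr
    calc D * (t / l) ≤ D * (ε / 4 / log D) := by gcongr
      _ = ε / 4 * (D / log D) := by ring
  have hround : 1 ≤ ε / 4 * (D / log D) := by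
    calc 1 = ε / 4 * (4 / ε * log D / log D) := by field_simp
      _ ≤ ε / 4 * (D / log D) := by gcongr
  have hfloor := Nat.lt_floor_add_one ((1 + ε) * D / log D)
  rw [mul_div_assoc] at hfloor ⊢
  linarith

lemma rpow_le_exp_neg_div_mul (hε : 0 < ε) (hD : 1 < D) (hDa : log D ≤ D ^ (ε / (8 + 4 * ε)))
    (hQ : (1 + ε / 2) * (D / log D) ≤ Q) :
    D ^ (ε / (8 + 4 * ε)) ≤ exp (-(D * (1 + ε / 4) / Q)) * Q := by
  have hD0 : 0 < D := zero_lt_one.trans hD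
  have hlog : 0 < log D := log_pos hD
  set a := ε / (8 + 4 * ε) with ha
  -- The exponent `a` is the solution of this equation.
  have hsplit : 1 + ε / 4 = (1 - 2 * a) * (1 + ε / 2) := by rw [ha]; field_simp; ring
  have hQ0 : 0 < Q := (by positivity : 0 < (1 + ε / 2) * (D / log D)).trans_le hQ
  have hm : D * (1 + ε / 4) / Q ≤ (1 - 2 * a) * log D := by
    have ha' : 0 ≤ 1 - 2 * a := by
      refine nonneg_of_mul_nonneg_left (b := 1 + ε / 2) ?_ (by positivity)
      rw [← hsplit]
      positivity
    rw [div_le_iff₀ hQ0]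
    calc D * (1 + ε / 4) = (1 - 2 * a) * log D * ((1 + ε / 2) * (D / log D)) := by
          rw [hsplit]; field_simp
      _ ≤ (1 - 2 * a) * log D * Q := by gcongr
  calc D ^ a = D ^ (a + a) / D ^ a := by rw [rpow_add hD0]; field_simp
    _ ≤ D ^ (a + a) / log D := by gcongr
    _ = exp (-((1 - 2 * a) * log D)) * (D / log D) := by
        rw [mul_div_assoc', rpow_def_of_pos hD0]
        nth_rw 4 [← exp_log hD0]
        rw [← exp_add]
        ring_nf
    _ ≤ exp (-(D * (1 + ε / 4) / Q)) * Q := by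
        gcongr
        exact (le_mul_of_one_le_left (by positivity) (by linarith)).trans hQ

end Asymptotics

lemma colorable_floor_of_log_le_rpow {V : Type*} [Fintype V] {G : SimpleGraph V}
    [DecidableRel G.Adj] {d : ℕ} {ε : ℝ} (hε : 0 < ε) (hG : G.CliqueFree 3)
    (hd : ∀ v, G.degree v ≤ d) (hd1 : 1 < (d : ℝ))
    (hlog : log d ≤ (d : ℝ) ^ (ε / (8 + 4 * ε)))
    (hlog_rpow : 4 * (1 + 4 / ε) / ε * log d ≤ (d : ℝ) ^ (ε / (8 + 4 * ε)))
    (hlog_self : 4 / ε * log d ≤ d) :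
    G.Colorable ⌊(1 + ε) * (d : ℝ) / log d⌋₊ := by
  have hlog0 := log_pos hd1
  have hl : 0 < (d : ℝ) ^ (ε / (8 + 4 * ε)) := by positivity
  have hQ := mul_div_log_le_floor_sub hε hlog0 hl hlog_rpow hlog_self
  have ht : (1 + 4 / ε) / (1 + 4 / ε - 1) = 1 + ε / 4 := by field_simp; ring
  refine colorable_of_le_exp_neg_mul hG hd (lt_add_of_pos_right 1 (by positivity)) hl
    ((by positivity : 0 < (1 + ε / 2) * (d / log d)).trans_le hQ) ?_
  rw [ht]
  exact rpow_le_exp_neg_div_mul hε hd1 hlog hQ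

lemma colorable_of_forall_finite_subgraph {V : Type*} {G : SimpleGraph V} {q : ℕ}
    (h : ∀ H : G.Subgraph, H.verts.Finite → H.coe.Colorable q) : G.Colorable q :=
  SimpleGraph.nonempty_hom_of_forall_finite_subgraph_hom fun H hH => (h H hH).some

theorem stmt_14_general.{u} (ε : ℝ) (hε : 0 < ε) :
    ∃ Δ₀ : ℕ, ∀ Δ : ℕ, Δ₀ ≤ Δ → ∀ (V : Type u) (G : SimpleGraph V) [G.LocallyFinite],
      G.CliqueFree 3 → (∀ v, G.degree v ≤ Δ) →
      G.Colorable ⌊(1 + ε) * (Δ : ℝ) / Real.log (Δ : ℝ)⌋₊ := by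
  have ha : 0 < ε / (8 + 4 * ε) := by positivity
  have hlarge : ∀ᶠ x : ℝ in atTop, 1 < x ∧ log x ≤ x ^ (ε / (8 + 4 * ε)) ∧
      4 * (1 + 4 / ε) / ε * log x ≤ x ^ (ε / (8 + 4 * ε)) ∧ 4 / ε * log x ≤ x := by
    filter_upwards [eventually_gt_atTop 1, eventually_mul_log_le_rpow ha 1,
      eventually_mul_log_le_rpow ha (4 * (1 + 4 / ε) / ε),
      eventually_mul_log_le_rpow one_pos (4 / ε)] with x h1 hlog hlog_rpow hlog_self
    exact ⟨h1, by rwa [one_mul] at hlog, hlog_rpow, by rwa [rpow_one] at hlog_self⟩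
  obtain ⟨Δ₀, hΔ₀⟩ := eventually_atTop.1 (tendsto_natCast_atTop_atTop.eventually hlarge)
  refine ⟨Δ₀, fun Δ hΔ V G _ hG hd => colorable_of_forall_finite_subgraph fun H hH => ?_⟩
  classical
  have := hH.fintype
  obtain ⟨h1, hlog, hlog_rpow, hlog_self⟩ := hΔ₀ Δ hΔ
  exact colorable_floor_of_log_le_rpow hε (hG.comap H.coe_isContained)
    (fun v => by convert Nat.le_trans (H.coeCopy.degree_le v) (hd _)) h1 hlog hlog_rpow hlog_self

/-- **Johansson/Molloy theorem.** For every `ε ∈ (0,1)` and all sufficiently large `Δ`,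
every finite triangle-free graph of maximum degree at most `Δ` is properly colorable with
`⌊(1+ε)·Δ/ln Δ⌋` colors. -/
theorem stmt_14 (ε : ℝ) (hε : ε ∈ Set.Ioo (0 : ℝ) 1) :
    ∃ Δ₀ : ℕ, ∀ Δ : ℕ, Δ₀ ≤ Δ →
      ∀ (V : Type) [Fintype V] (G : SimpleGraph V) [DecidableRel G.Adj],
        G.CliqueFree 3 → (∀ v, G.degree v ≤ Δ) →
        G.Colorable ⌊(1 + ε) * (Δ : ℝ) / Real.log (Δ : ℝ)⌋₊ := by
  obtain ⟨Δ₀, h⟩ := stmt_14_general ε hε.1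
  exact ⟨Δ₀, fun Δ hΔ V _ G _ => h Δ hΔ V G⟩
end

section
/- Let G be a finite simple graph and let b ≥ 1 be an integer. Then there exists a labeling p : V → Fin b of the vertices into b parts such that every vertex v has at most deg(v)/b neighbors in its own part, i.e., |{u ∈ N(v) : p(u) = p(v)}| ≤ deg(v)/b for every v. -/
/-!
Choose a labeling with the fewest monochromatic edges. Relabeling a single vertex `v` affects only
the edges at `v`, so by minimality no label occurs among the neighbors of `v` less often than the
label of `v` itself. Since the least frequent of the `b` labels occurs at most `deg(v) / b` times
among the neighbors of `v`, so does the label of `v`.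
-/

open Finset Function

theorem degree_le_degree_of_deleteIncidenceSet_eq {V : Type*} [Fintype V]
    {G H : SimpleGraph V} [DecidableRel G.Adj] [DecidableRel H.Adj] {v : V}
    (hdelete : G.deleteIncidenceSet v = H.deleteIncidenceSet v)
    (hcard : #G.edgeFinset ≤ #H.edgeFinset) : G.degree v ≤ H.degree v := by
  classical
  have hrest : #G.edgeFinset - G.degree v = #H.edgeFinset - H.degree v := by
    rw [← G.card_edgeFinset_deleteIncidenceSet, ← H.card_edgeFinset_deleteIncidenceSet,
      SimpleGraph.edgeFinset_inj.mpr hdelete]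
  have hG := G.degree_le_card_edgeFinset v
  have hH := H.degree_le_card_edgeFinset v
  omega

section MonochromaticGraph

variable {V α : Type*} (G : SimpleGraph V) (p : V → α)

/-- The graph of the monochromatic edges of `G` under the vertex labeling `p`; its number of edges
is the quantity minimized to obtain a balanced labeling. -/
def monochromaticGraph : SimpleGraph V where
  Adj u v := G.Adj u v ∧ p u = p v
  symm := ⟨fun _ _ h => ⟨h.1.symm, h.2.symm⟩⟩
  loopless := ⟨fun _ h => h.1.ne rfl⟩

@[simp]
theorem monochromaticGraph_adj {u v : V} :
    (monochromaticGraph G p).Adj u v ↔ G.Adj u v ∧ p u = p v :=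
  Iff.rfl

instance [DecidableRel G.Adj] [DecidableEq α] : DecidableRel (monochromaticGraph G p).Adj :=
  fun u v => inferInstanceAs (Decidable (G.Adj u v ∧ p u = p v))

theorem deleteIncidenceSet_monochromaticGraph_update [DecidableEq V] (v : V) (c : α) :
    (monochromaticGraph G (update p v c)).deleteIncidenceSet v =
      (monochromaticGraph G p).deleteIncidenceSet v := by
  ext x y
  simp only [SimpleGraph.deleteIncidenceSet_adj, monochromaticGraph_adj]
  refine and_congr_left fun ⟨hx, hy⟩ => ?_
  rw [update_of_ne hx, update_of_ne hy]

variable [Fintype V] [DecidableRel G.Adj] [DecidableEq α]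

theorem degree_monochromaticGraph (v : V) :
    (monochromaticGraph G p).degree v = #{u ∈ G.neighborFinset v | p u = p v} := by
  rw [← SimpleGraph.card_neighborFinset_eq_degree]
  congr 1
  ext u
  simp [eq_comm]

theorem degree_monochromaticGraph_update [DecidableEq V] (v : V) (c : α) :
    (monochromaticGraph G (update p v c)).degree v = #{u ∈ G.neighborFinset v | p u = c} := by
  rw [degree_monochromaticGraph, update_self]
  refine congrArg card (filter_congr fun u hu => ?_)
  rw [update_of_ne ((G.mem_neighborFinset v u).mp hu).ne']

theorem exists_labeling_forall_card_neighborFinset_filter_le [Nonempty α] :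
    ∃ p : V → α, ∀ v c,
      #{u ∈ G.neighborFinset v | p u = p v} ≤ #{u ∈ G.neighborFinset v | p u = c} := by
  classical
  let edgeCount (p : V → α) : ℕ := #(monochromaticGraph G p).edgeFinset
  refine ⟨argmin edgeCount, fun v c => ?_⟩
  rw [← degree_monochromaticGraph, ← degree_monochromaticGraph_update]
  exact degree_le_degree_of_deleteIncidenceSet_eq
    (deleteIncidenceSet_monochromaticGraph_update G _ v c).symm (argmin_le edgeCount _)

end MonochromaticGraph

/-- **Existence of a balanced partition.** For any finite simple graph and any `b ≥ 1`
there is a labeling of the vertices into `b` parts such that every vertex `v` has at most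
`deg(v)/b` neighbors in its own part. -/
theorem stmt_17 {V : Type*} [Fintype V] [DecidableEq V]
    (G : SimpleGraph V) [DecidableRel G.Adj] (b : ℕ) (hb : 1 ≤ b) :
    ∃ p : V → Fin b, ∀ v,
      (((G.neighborFinset v).filter (fun u => p u = p v)).card : ℝ) ≤
        (G.degree v : ℝ) / (b : ℝ) := by
  have : NeZero b := ⟨Nat.one_le_iff_ne_zero.mp hb⟩
  obtain ⟨p, hp⟩ := exists_labeling_forall_card_neighborFinset_filter_le (α := Fin b) G
  refine ⟨p, fun v => ?_⟩
  obtain ⟨c, -, hc⟩ : ∃ c ∈ univ,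
      (#{u ∈ G.neighborFinset v | p u = c} : ℝ) ≤ (G.degree v : ℝ) / b := by
    refine exists_card_fiber_le_of_card_le_nsmul univ_nonempty ?_
    rw [card_fin, nsmul_eq_mul, mul_div_cancel₀ _ (NeZero.ne (b : ℝ)),
      G.card_neighborFinset_eq_degree]
  exact (Nat.cast_le.mpr (hp v c)).trans hc
end
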